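/- arXiv:1601.05702 — 2 statements merged into one kernel-verified Lean document; each statement's English description precedes it below -/
import Mathlib

section
/- Fix a ∈ [1/2, 1). For every x ∈ ℝ, the map θ ↦ p_θ(x)^a is continuously differentiable on the open set Θ_a = (−a/(1+a), ∞) × ℝ × (0, ∞), and each of the three partial derivatives (x, θ) ↦ ∂_{θ_k} p_θ(x)^a (k = 1, 2, 3, corresponding to γ, μ, σ) is jointly continuous on ℝ × Θ_a. In particular, at every boundary point x = μ − σ/γ (γ ≠ 0) of the support, all three partial derivatives ∂_{θ_k} p_θ(x)^a tend to 0 as (x', θ') → (x, θ) with σ' + γ'(x' − μ') > 0. -/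
open MeasureTheory Filter Set Topology

/-- `u_γ(z)` for the GEV family. -/
noncomputable def gevU (γ z : ℝ) : ℝ :=
  if γ = 0 then Real.exp (-z) else (1 + γ * z) ^ (-γ⁻¹)

/-- Lebesgue density of the GEV distribution with parameter `θ = (γ, μ, σ)`. -/
noncomputable def gevDensity (θ : ℝ × ℝ × ℝ) (x : ℝ) : ℝ :=
  if 0 < θ.2.2 + θ.1 * (x - θ.2.1) then
    (θ.2.2)⁻¹ * Real.exp (-(gevU θ.1 ((x - θ.2.1) / θ.2.2))) *
      gevU θ.1 ((x - θ.2.1) / θ.2.2) ^ (θ.1 + 1)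
  else 0

/-!
With `u = u_γ(z)`, `L = log u` and `W = 1 + γ z`, the density on the support `{W > 0}` is `exp H`,
where `H = -log σ - exp L + (γ + 1) L`. Since `-L = z · log (1 + γ z) / (γ z)` and
`log (1 + t) / t` is analytic across `t = 0`, the function `exp (a H)` is smooth in `(x, θ)` on the
support, the Gumbel case `γ = 0` included.

At a boundary point, `γ ≠ 0` and `γ L = -log W`, so `exp (a H) / W` is, up to the factor `σ ^ (-a)`,
`exp ((a (γ + 1) + γ) L - a exp L)`. If `γ > 0` then `L → ∞` and the double exponential wins; if
`γ < 0` then `L → -∞` and the exponent `a (γ + 1) + γ` is positive exactly when `γ > -a / (1 + a)`.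
As `W · dL` stays bounded, `exp (a H) / W → 0` and `u · exp (a H) / W → 0` force the derivative of
`exp (a H)` to vanish at the boundary, so its extension by zero is jointly `C¹` in `(x, θ)`.
-/

section ExtensionByZero

variable {X M : Type*} [TopologicalSpace X] [Zero M] {w : X → ℝ} {f : X → M} {q : X}

lemma indicator_pos_eventuallyEq_self (hw : ContinuousAt w q) (hq : 0 < w q) (f : X → M) :
    {p | 0 < w p}.indicator f =ᶠ[𝓝 q] f := by
  filter_upwards [hw.eventually_const_lt hq] with p hp
  exact indicator_of_mem (s := {p | 0 < w p}) hp f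

lemma indicator_pos_eventuallyEq_zero (hw : ContinuousAt w q) (hq : w q < 0) (f : X → M) :
    {p | 0 < w p}.indicator f =ᶠ[𝓝 q] fun _ => 0 := by
  filter_upwards [hw.eventually_lt_const hq] with p hp
  exact indicator_of_notMem (s := {p | 0 < w p}) (not_lt.2 hp.le) f

lemma tendsto_indicator_nhds_zero [TopologicalSpace M] {s : Set X} (h : Tendsto f (𝓝[s] q) (𝓝 0)) :
    Tendsto (s.indicator f) (𝓝 q) (𝓝 0) := by
  classical
  rw [← piecewise_eq_indicator]
  exact h.piecewise tendsto_const_nhds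

lemma continuousAt_indicator_pos [TopologicalSpace M] (hw : ContinuousAt w q)
    (hpos : 0 < w q → ContinuousAt f q)
    (hzero : w q = 0 → Tendsto f (𝓝[{p | 0 < w p}] q) (𝓝 0)) :
    ContinuousAt ({p | 0 < w p}.indicator f) q := by
  rcases lt_trichotomy (w q) 0 with hq | hq | hq
  · exact continuousAt_const.congr (indicator_pos_eventuallyEq_zero hw hq f).symm
  · rw [ContinuousAt, indicator_of_notMem (by simp [hq])]
    exact tendsto_indicator_nhds_zero (hzero hq)
  · exact (hpos hq).congr (indicator_pos_eventuallyEq_self hw hq f).symm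

end ExtensionByZero

section DifferentiableExtensionByZero

variable {E F : Type*} [NormedAddCommGroup E] [NormedSpace ℝ E]
  [NormedAddCommGroup F] [NormedSpace ℝ F] {w : E → ℝ} {f : E → F} {q : E}

lemma hasFDerivAt_zero_indicator_pos (hw : DifferentiableAt ℝ w q) (hq : w q = 0)
    (hf : Tendsto (fun p => (w p)⁻¹ • f p) (𝓝[{p | 0 < w p}] q) (𝓝 0)) :
    HasFDerivAt ({p | 0 < w p}.indicator f) (0 : E →L[ℝ] F) q := by
  have hw_bigO : w =O[𝓝 q] fun p => p - q := by
    simpa only [hq, sub_zero] using hw.hasFDerivAt.isBigO_sub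
  have hquot := (Asymptotics.isLittleO_one_iff ℝ).2 (tendsto_indicator_nhds_zero hf)
  have hprod : ({p | 0 < w p}.indicator f) =
      fun p => w p • {p | 0 < w p}.indicator (fun p => (w p)⁻¹ • f p) p := by
    funext p
    by_cases hp : 0 < w p
    · simp [indicator, hp, hp.ne']
    · simp [indicator, hp]
  have hlittle : ({p | 0 < w p}.indicator f) =o[𝓝 q] fun p => p - q := by
    rw [hprod]
    simpa only [smul_eq_mul, mul_one, Asymptotics.isLittleO_norm_right] using
      (hw_bigO.norm_right.smul_isLittleO hquot)
  refine HasFDerivAt.of_isLittleO (hlittle.congr_left fun p => ?_)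
  simp [indicator, hq]

lemma hasFDerivAt_indicator_pos (hw : DifferentiableAt ℝ w q)
    (hpos : 0 < w q → DifferentiableAt ℝ f q)
    (hzero : w q = 0 → Tendsto (fun p => (w p)⁻¹ • f p) (𝓝[{p | 0 < w p}] q) (𝓝 0)) :
    HasFDerivAt ({p | 0 < w p}.indicator f) ({p | 0 < w p}.indicator (fderiv ℝ f) q) q := by
  rcases lt_trichotomy (w q) 0 with hq | hq | hq
  · rw [indicator_of_notMem (by simp [hq.le])]
    exact (hasFDerivAt_const (0 : F) q).congr_of_eventuallyEq
      (indicator_pos_eventuallyEq_zero hw.continuousAt hq f)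
  · rw [indicator_of_notMem (by simp [hq])]
    exact hasFDerivAt_zero_indicator_pos hw hq (hzero hq)
  · rw [indicator_of_mem (by simp [hq])]
    exact (hpos hq).hasFDerivAt.congr_of_eventuallyEq
      (indicator_pos_eventuallyEq_self hw.continuousAt hq f)

theorem contDiffOn_one_indicator_pos {U : Set E} (hU : IsOpen U)
    (hw : ∀ q ∈ U, DifferentiableAt ℝ w q)
    (hpos : ∀ q ∈ U, 0 < w q → ContDiffAt ℝ 1 f q)
    (hzero : ∀ q ∈ U, w q = 0 → Tendsto (fun p => (w p)⁻¹ • f p) (𝓝[{p | 0 < w p}] q) (𝓝 0))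
    (hzero' : ∀ q ∈ U, w q = 0 → Tendsto (fderiv ℝ f) (𝓝[{p | 0 < w p}] q) (𝓝 0)) :
    ContDiffOn ℝ 1 ({p | 0 < w p}.indicator f) U := by
  have hderiv : ∀ q ∈ U,
      HasFDerivAt ({p | 0 < w p}.indicator f) ({p | 0 < w p}.indicator (fderiv ℝ f) q) q :=
    fun q hq => hasFDerivAt_indicator_pos (hw q hq)
      (fun h => (hpos q hq h).differentiableAt one_ne_zero) (hzero q hq)
  have hcont : ContinuousOn ({p | 0 < w p}.indicator (fderiv ℝ f)) U := fun q hq =>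
    (continuousAt_indicator_pos (hw q hq).continuousAt
      (fun h => (hpos q hq h).continuousAt_fderiv one_ne_zero)
      (hzero' q hq)).continuousWithinAt
  refine (contDiffOn_succ_iff_fderiv_of_isOpen (n := 0) hU).2 ⟨?_, by simp, ?_⟩
  · exact fun q hq => (hderiv q hq).differentiableAt.differentiableWithinAt
  · exact contDiffOn_zero.2 (hcont.congr fun q hq => (hderiv q hq).fderiv)

end DifferentiableExtensionByZero

lemma analyticAt_dslope {𝕜 E : Type*} [NontriviallyNormedField 𝕜] [NormedAddCommGroup E]
    [NormedSpace 𝕜 E] {f : 𝕜 → E} {a b : 𝕜} (ha : AnalyticAt 𝕜 f a) (hb : AnalyticAt 𝕜 f b) :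
    AnalyticAt 𝕜 (dslope f a) b := by
  rcases eq_or_ne b a with rfl | hne
  · obtain ⟨p, hp⟩ := ha
    exact ⟨p.fslope, hp.has_fpower_series_dslope_fslope⟩
  · have hslope : AnalyticAt 𝕜 (fun t => (t - a)⁻¹ • (f t - f a)) b :=
      ((analyticAt_id.sub analyticAt_const).inv (sub_ne_zero.2 hne)).smul
        (hb.sub analyticAt_const)
    exact hslope.congr (dslope_eventuallyEq_slope_of_ne f hne).symm

section Decay

variable {ι : Type*} {l : Filter ι} {s y : ι → ℝ} {a s₀ : ℝ}

lemma tendsto_exp_mul_sub_mul_exp_atTop (ha : 0 < a) (hs : Tendsto s l (𝓝 s₀))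
    (hy : Tendsto y l atTop) :
    Tendsto (fun i => Real.exp (s i * y i - a * Real.exp (y i))) l (𝓝 0) := by
  have hratio : Tendsto (fun i => y i * Real.exp (-y i)) l (𝓝 0) := by
    simpa only [pow_one, Function.comp_def] using
      (Real.tendsto_pow_mul_exp_neg_atTop_nhds_zero 1).comp hy
  have hfactor : Tendsto (fun i => s i * (y i * Real.exp (-y i)) - a) l (𝓝 (-a)) := by
    simpa only [mul_zero, zero_sub] using (hs.mul hratio).sub_const a
  have hexponent := (Real.tendsto_exp_atTop.comp hy).atTop_mul_neg (neg_lt_zero.2 ha) hfactor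
  refine (Real.tendsto_exp_atBot.comp hexponent).congr fun i => ?_
  simp only [Function.comp_apply, Real.exp_neg]
  congr 1
  field_simp

lemma tendsto_exp_mul_sub_mul_exp_atBot (ha : 0 ≤ a) (hs : Tendsto s l (𝓝 s₀)) (hs₀ : 0 < s₀)
    (hy : Tendsto y l atBot) :
    Tendsto (fun i => Real.exp (s i * y i - a * Real.exp (y i))) l (𝓝 0) := by
  refine squeeze_zero (fun i => (Real.exp_pos _).le) (fun i => Real.exp_le_exp.2 ?_)
    (Real.tendsto_exp_atBot.comp (hs.pos_mul_atBot hs₀ hy))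
  exact sub_le_self _ (by positivity)

end Decay

/-- The standardized variable `z = (x - μ) / σ` as a function of `(x, γ, μ, σ)`. -/
noncomputable def gevStd (q : ℝ × ℝ × ℝ × ℝ) : ℝ := (q.1 - q.2.2.1) / q.2.2.2

/-- The quantity `W = 1 + γ z`, which for `σ > 0` is positive exactly on the support. -/
noncomputable def gevBase (q : ℝ × ℝ × ℝ × ℝ) : ℝ := 1 + q.2.1 * gevStd q

/-- `L = log u_γ(z)`, written with the divided difference of `t ↦ log (1 + t)` at `0` so that it
needs no case distinction at `γ = 0`. -/
noncomputable def gevLogU (q : ℝ × ℝ × ℝ × ℝ) : ℝ :=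
  -(gevStd q * dslope (fun t => Real.log (1 + t)) 0 (q.2.1 * gevStd q))

/-- The logarithm `H` of the density on the support. -/
noncomputable def gevLogDensity (q : ℝ × ℝ × ℝ × ℝ) : ℝ :=
  -Real.log q.2.2.2 - Real.exp (gevLogU q) + (q.2.1 + 1) * gevLogU q

/-- The differential `dγ` of the shape parameter. -/
def gevShapeCLM : (ℝ × ℝ × ℝ × ℝ) →L[ℝ] ℝ :=
  (ContinuousLinearMap.fst ℝ ℝ (ℝ × ℝ)).comp (ContinuousLinearMap.snd ℝ ℝ (ℝ × ℝ × ℝ))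

/-- The differential `dσ` of the scale parameter. -/
def gevScaleCLM : (ℝ × ℝ × ℝ × ℝ) →L[ℝ] ℝ :=
  ((ContinuousLinearMap.snd ℝ ℝ ℝ).comp (ContinuousLinearMap.snd ℝ ℝ (ℝ × ℝ))).comp
    (ContinuousLinearMap.snd ℝ ℝ (ℝ × ℝ × ℝ))

section Density

variable {q : ℝ × ℝ × ℝ × ℝ}

lemma mul_gevLogU (q : ℝ × ℝ × ℝ × ℝ) : q.2.1 * gevLogU q = -Real.log (gevBase q) := by
  have h := sub_smul_dslope (fun t => Real.log (1 + t)) 0 (q.2.1 * gevStd q)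
  simp only [sub_zero, add_zero, Real.log_one, smul_eq_mul] at h
  rw [gevLogU, gevBase, ← h]
  ring

lemma gevU_eq_exp_gevLogU (hW : 0 < gevBase q) :
    gevU q.2.1 (gevStd q) = Real.exp (gevLogU q) := by
  rw [gevU]
  split_ifs with hγ
  · have hderiv : HasDerivAt (fun t : ℝ => Real.log (1 + t)) (1 / (1 + 0)) 0 :=
      ((hasDerivAt_id (0 : ℝ)).const_add 1).log (by simp)
    simp [gevLogU, hγ, hderiv.deriv]
  · have hlog : Real.log (gevBase q) = -(q.2.1 * gevLogU q) := by rw [mul_gevLogU, neg_neg]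
    rw [← gevBase, Real.rpow_def_of_pos hW, hlog]
    congr 1
    field_simp

lemma gevScale_mul_gevBase (hσ : q.2.2.2 ≠ 0) :
    q.2.2.2 * gevBase q = q.2.2.2 + q.2.1 * (q.1 - q.2.2.1) := by
  rw [gevBase, gevStd]
  field_simp

lemma gevDensity_eq_indicator_exp (hσ : 0 < q.2.2.2) :
    gevDensity q.2 q.1 = {p | 0 < gevBase p}.indicator (fun p => Real.exp (gevLogDensity p)) q := by
  rw [gevDensity, ← gevScale_mul_gevBase hσ.ne', indicator_apply]
  simp only [mul_pos_iff_of_pos_left hσ, mem_ofPred_eq]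
  refine if_ctx_congr Iff.rfl (fun hW => ?_) fun _ => rfl
  rw [← gevStd, gevU_eq_exp_gevLogU hW, ← Real.exp_mul, ← Real.exp_log (inv_pos.2 hσ),
    Real.log_inv, ← Real.exp_add, ← Real.exp_add, gevLogDensity]
  congr 1
  ring

lemma gevDensity_rpow_eq_indicator_exp {a : ℝ} (ha : a ≠ 0) (hσ : 0 < q.2.2.2) :
    gevDensity q.2 q.1 ^ a =
      {p | 0 < gevBase p}.indicator (fun p => Real.exp (a * gevLogDensity p)) q := by
  rw [gevDensity_eq_indicator_exp hσ]
  by_cases hW : 0 < gevBase q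
  · simp [indicator, hW, ← Real.exp_mul, mul_comm]
  · simp [indicator, hW, Real.zero_rpow ha]

lemma gevDensity_rpow_nonneg {a : ℝ} (ha : a ≠ 0) (hσ : 0 < q.2.2.2) :
    0 ≤ gevDensity q.2 q.1 ^ a := by
  rw [gevDensity_rpow_eq_indicator_exp ha hσ]
  exact indicator_nonneg (fun _ _ => (Real.exp_pos _).le) q

end Density

section Smoothness

variable {q : ℝ × ℝ × ℝ × ℝ} {n : WithTop ℕ∞}

lemma contDiffAt_gevStd (hσ : q.2.2.2 ≠ 0) : ContDiffAt ℝ n gevStd q :=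
  ContDiffAt.div (by fun_prop) (by fun_prop) hσ

lemma contDiffAt_gevBase (hσ : q.2.2.2 ≠ 0) : ContDiffAt ℝ n gevBase q := by
  have := contDiffAt_gevStd (n := n) hσ
  unfold gevBase
  fun_prop

lemma contDiffAt_gevLogU (hσ : q.2.2.2 ≠ 0) (hW : 0 < gevBase q) : ContDiffAt ℝ n gevLogU q := by
  have hZ := contDiffAt_gevStd (n := n) hσ
  have hlog : ∀ t : ℝ, 0 < 1 + t → AnalyticAt ℝ (fun t => Real.log (1 + t)) t :=
    fun t ht => AnalyticAt.log (by fun_prop) ht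
  have hslope : ContDiffAt ℝ n (dslope (fun t => Real.log (1 + t)) 0) (q.2.1 * gevStd q) :=
    (analyticAt_dslope (hlog 0 (by norm_num)) (hlog _ hW)).contDiffAt
  have hprod : ContDiffAt ℝ n (fun p : ℝ × ℝ × ℝ × ℝ => p.2.1 * gevStd p) q := by fun_prop
  exact (hZ.mul (hslope.comp q hprod)).neg

lemma contDiffAt_gevLogDensity (hσ : q.2.2.2 ≠ 0) (hW : 0 < gevBase q) :
    ContDiffAt ℝ n gevLogDensity q := by
  have hL := contDiffAt_gevLogU (n := n) hσ hW
  have : ContDiffAt ℝ n (fun p : ℝ × ℝ × ℝ × ℝ => Real.log p.2.2.2) q :=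
    ContDiffAt.log (by fun_prop) hσ
  unfold gevLogDensity
  fun_prop

lemma hasFDerivAt_gevShape (q : ℝ × ℝ × ℝ × ℝ) :
    HasFDerivAt (fun p : ℝ × ℝ × ℝ × ℝ => p.2.1) gevShapeCLM q :=
  gevShapeCLM.hasFDerivAt

lemma hasFDerivAt_gevScale (q : ℝ × ℝ × ℝ × ℝ) :
    HasFDerivAt (fun p : ℝ × ℝ × ℝ × ℝ => p.2.2.2) gevScaleCLM q :=
  gevScaleCLM.hasFDerivAt

lemma fderiv_gevLogDensity (hσ : q.2.2.2 ≠ 0) (hW : 0 < gevBase q) :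
    fderiv ℝ gevLogDensity q = -(q.2.2.2⁻¹ • gevScaleCLM) + gevLogU q • gevShapeCLM +
      (q.2.1 + 1 - Real.exp (gevLogU q)) • fderiv ℝ gevLogU q := by
  have hL : HasFDerivAt gevLogU (fderiv ℝ gevLogU q) q :=
    ((contDiffAt_gevLogU (n := 1) hσ hW).differentiableAt one_ne_zero).hasFDerivAt
  have hH : HasFDerivAt gevLogDensity _ q :=
    (((hasFDerivAt_gevScale q).log hσ).neg.sub hL.exp).add
      (((hasFDerivAt_gevShape q).add_const 1).mul hL)
  rw [hH.fderiv]
  module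

-- Differentiate `γ L = -log W`.
lemma gevBase_smul_fderiv_gevLogU (hσ : q.2.2.2 ≠ 0) (hW : 0 < gevBase q) (hγ : q.2.1 ≠ 0) :
    gevBase q • fderiv ℝ gevLogU q =
      -(q.2.1⁻¹ • (fderiv ℝ gevBase q + (gevBase q * gevLogU q) • gevShapeCLM)) := by
  have hL : HasFDerivAt gevLogU (fderiv ℝ gevLogU q) q :=
    ((contDiffAt_gevLogU (n := 1) hσ hW).differentiableAt one_ne_zero).hasFDerivAt
  have hB : HasFDerivAt gevBase (fderiv ℝ gevBase q) q :=
    ((contDiffAt_gevBase (n := 1) hσ).differentiableAt one_ne_zero).hasFDerivAt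
  have hlog : HasFDerivAt (fun p : ℝ × ℝ × ℝ × ℝ => p.2.1 * gevLogU p)
      (-((gevBase q)⁻¹ • fderiv ℝ gevBase q)) q := by
    simp only [mul_gevLogU]
    exact (hB.log hW.ne').neg
  have hrel := ((hasFDerivAt_gevShape q).mul hL).unique hlog
  have hdL : fderiv ℝ gevLogU q =
      -(q.2.1⁻¹ • ((gevBase q)⁻¹ • fderiv ℝ gevBase q + gevLogU q • gevShapeCLM)) := by
    rw [← inv_smul_smul₀ hγ (fderiv ℝ gevLogU q), eq_sub_of_add_eq hrel]
    module
  rw [hdL]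
  match_scalars <;> field_simp

end Smoothness

section Boundary

variable {q : ℝ × ℝ × ℝ × ℝ}

lemma gevShape_ne_zero_of_gevBase_eq_zero (hW : gevBase q = 0) : q.2.1 ≠ 0 := by
  intro hγ
  simp [gevBase, hγ] at hW

lemma tendsto_gevBase_nhdsGT_zero (hσ : q.2.2.2 ≠ 0) (hW : gevBase q = 0) :
    Tendsto gevBase (𝓝[{p | 0 < gevBase p}] q) (𝓝[>] 0) := by
  have hcont := (contDiffAt_gevBase (n := 0) hσ).continuousAt.tendsto
  rw [hW] at hcont
  exact tendsto_nhdsWithin_iff.2 ⟨hcont.mono_left nhdsWithin_le_nhds, self_mem_nhdsWithin⟩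

lemma tendsto_gevShape (q : ℝ × ℝ × ℝ × ℝ) (s : Set (ℝ × ℝ × ℝ × ℝ)) :
    Tendsto (fun p => p.2.1) (𝓝[s] q) (𝓝 q.2.1) :=
  (hasFDerivAt_gevShape q).continuousAt.continuousWithinAt

lemma gevLogU_eventuallyEq_log_gevBase_mul (hγ : q.2.1 ≠ 0) :
    gevLogU =ᶠ[𝓝 q] fun p => Real.log (gevBase p) * -p.2.1⁻¹ := by
  filter_upwards [(hasFDerivAt_gevShape q).continuousAt.eventually_ne hγ] with p hp
  rw [mul_neg, ← neg_mul, ← mul_gevLogU]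
  field_simp

lemma tendsto_gevLogU_atTop (hσ : q.2.2.2 ≠ 0) (hW : gevBase q = 0) (hγ : 0 < q.2.1) :
    Tendsto gevLogU (𝓝[{p | 0 < gevBase p}] q) atTop := by
  have hlog := Real.tendsto_log_nhdsGT_zero.comp (tendsto_gevBase_nhdsGT_zero hσ hW)
  exact (hlog.atBot_mul_neg (neg_lt_zero.2 (inv_pos.2 hγ))
    ((tendsto_gevShape q _).inv₀ hγ.ne').neg).congr'
      ((gevLogU_eventuallyEq_log_gevBase_mul hγ.ne').filter_mono nhdsWithin_le_nhds).symm

lemma tendsto_gevLogU_atBot (hσ : q.2.2.2 ≠ 0) (hW : gevBase q = 0) (hγ : q.2.1 < 0) :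
    Tendsto gevLogU (𝓝[{p | 0 < gevBase p}] q) atBot := by
  have hlog := Real.tendsto_log_nhdsGT_zero.comp (tendsto_gevBase_nhdsGT_zero hσ hW)
  exact (hlog.atBot_mul_pos (neg_pos.2 (inv_lt_zero.2 hγ))
    ((tendsto_gevShape q _).inv₀ hγ.ne).neg).congr'
      ((gevLogU_eventuallyEq_log_gevBase_mul hγ.ne).filter_mono nhdsWithin_le_nhds).symm

lemma tendsto_gevBase_mul_gevLogU (hσ : q.2.2.2 ≠ 0) (hW : gevBase q = 0) :
    Tendsto (fun p => gevBase p * gevLogU p) (𝓝[{p | 0 < gevBase p}] q) (𝓝 0) := by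
  have hγ := gevShape_ne_zero_of_gevBase_eq_zero hW
  have hWlog : Tendsto (fun p => gevBase p * Real.log (gevBase p))
      (𝓝[{p | 0 < gevBase p}] q) (𝓝 0) := by
    simpa only [zero_mul, Function.comp_def] using (Real.continuous_mul_log.tendsto 0).comp
      ((tendsto_gevBase_nhdsGT_zero hσ hW).mono_right nhdsWithin_le_nhds)
  have hlim := hWlog.mul ((tendsto_gevShape q {p | 0 < gevBase p}).inv₀ hγ).neg
  rw [zero_mul] at hlim
  refine hlim.congr' ?_
  filter_upwards [(gevLogU_eventuallyEq_log_gevBase_mul hγ).filter_mono nhdsWithin_le_nhds]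
    with p hp
  rw [hp, mul_assoc]

lemma tendsto_gevBase_smul_fderiv_gevLogU (hσ : q.2.2.2 ≠ 0) (hW : gevBase q = 0) :
    Tendsto (fun p => gevBase p • fderiv ℝ gevLogU p) (𝓝[{p | 0 < gevBase p}] q)
      (𝓝 (-(q.2.1⁻¹ • fderiv ℝ gevBase q))) := by
  have hγ := gevShape_ne_zero_of_gevBase_eq_zero hW
  have hdW : Tendsto (fderiv ℝ gevBase) (𝓝[{p | 0 < gevBase p}] q) (𝓝 (fderiv ℝ gevBase q)) :=
    ((contDiffAt_gevBase (n := 1) hσ).continuousAt_fderiv one_ne_zero).continuousWithinAt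
  have hlim := (((tendsto_gevShape q _).inv₀ hγ).smul
    (hdW.add ((tendsto_gevBase_mul_gevLogU hσ hW).smul_const gevShapeCLM))).neg
  rw [zero_smul, add_zero] at hlim
  refine hlim.congr' ?_
  filter_upwards [self_mem_nhdsWithin,
    (tendsto_gevShape q _).eventually_ne hγ,
    (hasFDerivAt_gevScale q).continuousAt.continuousWithinAt.eventually_ne hσ] with p hpW hpγ hpσ
  exact (gevBase_smul_fderiv_gevLogU hpσ hpW hpγ).symm

lemma exp_gevLogU_mul_exp_gevLogDensity_div_gevBase (a k : ℝ) (hW : 0 < gevBase q) :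
    Real.exp (k * gevLogU q) * ((gevBase q)⁻¹ * Real.exp (a * gevLogDensity q)) =
      Real.exp (-(a * Real.log q.2.2.2)) *
        Real.exp ((a * (q.2.1 + 1) + q.2.1 + k) * gevLogU q - a * Real.exp (gevLogU q)) := by
  have hinv : (gevBase q)⁻¹ = Real.exp (q.2.1 * gevLogU q) := by
    rw [mul_gevLogU, Real.exp_neg, Real.exp_log hW]
  rw [hinv, gevLogDensity, ← Real.exp_add, ← Real.exp_add, ← Real.exp_add]
  congr 1
  ring

lemma tendsto_exp_gevLogU_mul_exp_gevLogDensity_div_gevBase {a k : ℝ} (ha : 0 < a) (hk : 0 ≤ k)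
    (hγa : -(a / (1 + a)) < q.2.1) (hσ : q.2.2.2 ≠ 0) (hW : gevBase q = 0) :
    Tendsto (fun p => Real.exp (k * gevLogU p) * ((gevBase p)⁻¹ * Real.exp (a * gevLogDensity p)))
      (𝓝[{p | 0 < gevBase p}] q) (𝓝 0) := by
  have hscale : Tendsto (fun p : ℝ × ℝ × ℝ × ℝ => Real.exp (-(a * Real.log p.2.2.2)))
      (𝓝[{p | 0 < gevBase p}] q) (𝓝 (Real.exp (-(a * Real.log q.2.2.2)))) :=
    ((((hasFDerivAt_gevScale q).continuousAt.log hσ).const_mul a).neg.rexp).continuousWithinAt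
  have hγ := tendsto_gevShape q {p | 0 < gevBase p}
  have hexponent := (((hγ.add_const 1).const_mul a).add hγ).add_const k
  have hexponent_pos : 0 < a * (q.2.1 + 1) + q.2.1 + k := by
    rw [← neg_div, div_lt_iff₀ (by linarith)] at hγa
    linarith
  have hdecay : Tendsto (fun p => Real.exp ((a * (p.2.1 + 1) + p.2.1 + k) * gevLogU p -
      a * Real.exp (gevLogU p))) (𝓝[{p | 0 < gevBase p}] q) (𝓝 0) := by
    rcases (gevShape_ne_zero_of_gevBase_eq_zero hW).lt_or_gt with hneg | hpos
    · exact tendsto_exp_mul_sub_mul_exp_atBot ha.le hexponent hexponent_pos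
        (tendsto_gevLogU_atBot hσ hW hneg)
    · exact tendsto_exp_mul_sub_mul_exp_atTop ha hexponent (tendsto_gevLogU_atTop hσ hW hpos)
  have hlim := hscale.mul hdecay
  rw [mul_zero] at hlim
  refine hlim.congr' ?_
  filter_upwards [self_mem_nhdsWithin] with p hp
  exact (exp_gevLogU_mul_exp_gevLogDensity_div_gevBase a k hp).symm

-- Each of the factors multiplying `exp (a H) / W` and `u * exp (a H) / W` here has a finite limit
-- at the boundary.
lemma fderiv_exp_mul_gevLogDensity (a : ℝ) (hσ : q.2.2.2 ≠ 0) (hW : 0 < gevBase q) :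
    fderiv ℝ (fun p => Real.exp (a * gevLogDensity p)) q =
      a • (((gevBase q)⁻¹ * Real.exp (a * gevLogDensity q)) •
          (-((gevBase q * q.2.2.2⁻¹) • gevScaleCLM) + (gevBase q * gevLogU q) • gevShapeCLM +
            (q.2.1 + 1) • gevBase q • fderiv ℝ gevLogU q) -
        (Real.exp (gevLogU q) * ((gevBase q)⁻¹ * Real.exp (a * gevLogDensity q))) •
          gevBase q • fderiv ℝ gevLogU q) := by
  have hH : HasFDerivAt gevLogDensity (fderiv ℝ gevLogDensity q) q :=
    ((contDiffAt_gevLogDensity (n := 1) hσ hW).differentiableAt one_ne_zero).hasFDerivAt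
  rw [(hH.const_mul a).exp.fderiv, fderiv_gevLogDensity hσ hW]
  match_scalars <;> field_simp

lemma tendsto_fderiv_exp_mul_gevLogDensity {a : ℝ} (ha : 0 < a) (hγa : -(a / (1 + a)) < q.2.1)
    (hσ : q.2.2.2 ≠ 0) (hW : gevBase q = 0) :
    Tendsto (fderiv ℝ fun p => Real.exp (a * gevLogDensity p)) (𝓝[{p | 0 < gevBase p}] q)
      (𝓝 0) := by
  have hK := tendsto_exp_gevLogU_mul_exp_gevLogDensity_div_gevBase ha le_rfl hγa hσ hW
  have huK := tendsto_exp_gevLogU_mul_exp_gevLogDensity_div_gevBase ha zero_le_one hγa hσ hW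
  simp only [zero_mul, one_mul, Real.exp_zero] at hK huK
  have hB := (tendsto_gevBase_nhdsGT_zero hσ hW).mono_right nhdsWithin_le_nhds
  have hscale : Tendsto (fun p : ℝ × ℝ × ℝ × ℝ => p.2.2.2) (𝓝[{p | 0 < gevBase p}] q)
      (𝓝 q.2.2.2) := (hasFDerivAt_gevScale q).continuousAt.continuousWithinAt
  have hdL := tendsto_gevBase_smul_fderiv_gevLogU hσ hW
  have hlim := ((hK.smul ((((hB.mul (hscale.inv₀ hσ)).smul_const gevScaleCLM).neg.add
    ((tendsto_gevBase_mul_gevLogU hσ hW).smul_const gevShapeCLM)).add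
      (((tendsto_gevShape q _).add_const 1).smul hdL))).sub (huK.smul hdL)).const_smul a
  simp only [zero_smul, sub_zero, smul_zero] at hlim
  refine hlim.congr' ?_
  filter_upwards [self_mem_nhdsWithin, hscale.eventually_ne hσ] with p hpW hpσ
  exact (fderiv_exp_mul_gevLogDensity a hpσ hpW).symm

end Boundary

lemma isOpen_shape_gt_and_scale_pos (c : ℝ) :
    IsOpen {q : ℝ × ℝ × ℝ × ℝ | c < q.2.1 ∧ 0 < q.2.2.2} :=
  (isOpen_lt continuous_const (by fun_prop)).and (isOpen_lt continuous_const (by fun_prop))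

theorem contDiffOn_gevDensity_rpow {a : ℝ} (ha : 0 < a) :
    ContDiffOn ℝ 1 (fun q : ℝ × ℝ × ℝ × ℝ => gevDensity q.2 q.1 ^ a)
      {q | -(a / (1 + a)) < q.2.1 ∧ 0 < q.2.2.2} := by
  refine (contDiffOn_one_indicator_pos (w := gevBase)
    (f := fun q => Real.exp (a * gevLogDensity q)) (isOpen_shape_gt_and_scale_pos _)
    (fun q hq => ?_) (fun q hq hW => ?_) (fun q hq hW => ?_) (fun q hq hW => ?_)).congr
    fun q hq => gevDensity_rpow_eq_indicator_exp ha.ne' hq.2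
  · exact (contDiffAt_gevBase (n := 1) hq.2.ne').differentiableAt one_ne_zero
  · exact (contDiffAt_const.mul (contDiffAt_gevLogDensity hq.2.ne' hW)).exp
  · simpa only [zero_mul, Real.exp_zero, one_mul, smul_eq_mul] using
      tendsto_exp_gevLogU_mul_exp_gevLogDensity_div_gevBase ha le_rfl hq.1 hq.2.ne' hW
  · exact tendsto_fderiv_exp_mul_gevLogDensity ha hq.1 hq.2.ne' hW

-- A boundary point of the support minimizes the density.
lemma fderiv_gevDensity_rpow_eq_zero {a : ℝ} (ha : a ≠ 0) {q : ℝ × ℝ × ℝ × ℝ}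
    (hσ : 0 < q.2.2.2) (hq : q.2.2.2 + q.2.1 * (q.1 - q.2.2.1) = 0) :
    fderiv ℝ (fun p : ℝ × ℝ × ℝ × ℝ => gevDensity p.2 p.1 ^ a) q = 0 := by
  refine IsLocalMin.fderiv_eq_zero ?_
  filter_upwards [(hasFDerivAt_gevScale q).continuousAt.eventually_const_lt hσ] with p hp
  have hq0 : gevDensity q.2 q.1 = 0 := if_neg hq.not_gt
  rw [hq0, Real.zero_rpow ha]
  exact gevDensity_rpow_nonneg ha hp

theorem gev_density_pow_contDiff_general {a : ℝ} (ha : 0 < a) :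
    ∃ D : ℝ → (ℝ × ℝ × ℝ) → ((ℝ × ℝ × ℝ) →L[ℝ] ℝ),
      (∀ (x : ℝ) (θ : ℝ × ℝ × ℝ), -(a / (1 + a)) < θ.1 → 0 < θ.2.2 →
        HasFDerivAt (fun θ' : ℝ × ℝ × ℝ => gevDensity θ' x ^ a) (D x θ) θ) ∧
      ContinuousOn (fun q : ℝ × (ℝ × ℝ × ℝ) => D q.1 q.2)
        {q : ℝ × (ℝ × ℝ × ℝ) | -(a / (1 + a)) < q.2.1 ∧ 0 < q.2.2.2} ∧
      (∀ θ : ℝ × ℝ × ℝ, -(a / (1 + a)) < θ.1 → 0 < θ.2.2 → θ.1 ≠ 0 →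
        Filter.Tendsto (fun q : ℝ × (ℝ × ℝ × ℝ) => D q.1 q.2)
          (nhdsWithin (θ.2.1 - θ.2.2 / θ.1, θ)
            {q : ℝ × (ℝ × ℝ × ℝ) | 0 < q.2.2.2 + q.2.1 * (q.1 - q.2.2.1)})
          (nhds 0)) := by
  set P : ℝ × ℝ × ℝ × ℝ → ℝ := fun q => gevDensity q.2 q.1 ^ a with hP
  have hU := isOpen_shape_gt_and_scale_pos (-(a / (1 + a)))
  have hC1 : ContDiffOn ℝ 1 P {q | -(a / (1 + a)) < q.2.1 ∧ 0 < q.2.2.2} :=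
    contDiffOn_gevDensity_rpow ha
  have hcont : ContinuousOn
      (fun q => (fderiv ℝ P q).comp (ContinuousLinearMap.inr ℝ ℝ (ℝ × ℝ × ℝ)))
      {q | -(a / (1 + a)) < q.2.1 ∧ 0 < q.2.2.2} :=
    (hC1.continuousOn_fderiv_of_isOpen hU le_rfl).clm_comp continuousOn_const
  refine ⟨fun x θ => (fderiv ℝ P (x, θ)).comp (ContinuousLinearMap.inr ℝ ℝ (ℝ × ℝ × ℝ)),
    fun x θ hγ hσ => ?_, hcont, fun θ hγ hσ hγ0 => ?_⟩
  · have hdiff : DifferentiableAt ℝ P (x, θ) :=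
      (hC1.contDiffAt (hU.mem_nhds ⟨hγ, hσ⟩)).differentiableAt one_ne_zero
    exact hdiff.hasFDerivAt.comp θ (hasFDerivAt_prodMk_right x θ)
  · have hboundary : θ.2.2 + θ.1 * (θ.2.1 - θ.2.2 / θ.1 - θ.2.1) = 0 := by
      field_simp
      ring
    have hlim := (hcont.continuousAt
      (hU.mem_nhds (x := (θ.2.1 - θ.2.2 / θ.1, θ)) ⟨hγ, hσ⟩)).tendsto
    rw [hP, fderiv_gevDensity_rpow_eq_zero ha.ne' hσ hboundary,
      ContinuousLinearMap.zero_comp] at hlim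
    exact hlim.mono_left nhdsWithin_le_nhds

/-- **Continuous differentiability of `θ ↦ p_θ(x)^a`** for fixed `a ∈ [1/2, 1)`:
for every `x` the map is continuously differentiable on
`Θ_a = (−a/(1+a), ∞) × ℝ × (0, ∞)`, with derivative jointly continuous in `(x, θ)`;
in particular at every boundary point `x = μ − σ/γ` (`γ ≠ 0`) of the support the
derivative tends to `0` when approached from within the support. -/
theorem gev_density_pow_contDiff (a : ℝ) (ha1 : 1 / 2 ≤ a) (ha2 : a < 1) :
    ∃ D : ℝ → (ℝ × ℝ × ℝ) → ((ℝ × ℝ × ℝ) →L[ℝ] ℝ),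
      (∀ (x : ℝ) (θ : ℝ × ℝ × ℝ), -(a / (1 + a)) < θ.1 → 0 < θ.2.2 →
        HasFDerivAt (fun θ' : ℝ × ℝ × ℝ => gevDensity θ' x ^ a) (D x θ) θ) ∧
      ContinuousOn (fun q : ℝ × (ℝ × ℝ × ℝ) => D q.1 q.2)
        {q : ℝ × (ℝ × ℝ × ℝ) | -(a / (1 + a)) < q.2.1 ∧ 0 < q.2.2.2} ∧
      (∀ θ : ℝ × ℝ × ℝ, -(a / (1 + a)) < θ.1 → 0 < θ.2.2 → θ.1 ≠ 0 →
        Filter.Tendsto (fun q : ℝ × (ℝ × ℝ × ℝ) => D q.1 q.2)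
          (nhdsWithin (θ.2.1 - θ.2.2 / θ.1, θ)
            {q : ℝ × (ℝ × ℝ × ℝ) | 0 < q.2.2.2 + q.2.1 * (q.1 - q.2.2.1)})
          (nhds 0)) :=
  gev_density_pow_contDiff_general (by linarith)
end

section
/- Fix θ₀ = (γ₀, μ₀, σ₀) ∈ (−1/2, ∞) × ℝ × (0, ∞) and define m_θ(x) = 2 log((p_θ(x) + p_{θ₀}(x))/(2 p_{θ₀}(x))) for x with p_{θ₀}(x) > 0, where p_θ is the GEV density. Then there exist a measurable function ṁ : ℝ → [0, ∞) with ∫ ṁ² dP_{θ₀} < ∞ and a neighbourhood V of θ₀ in ℝ × ℝ × (0, ∞) such that |m_{θ₁}(x) − m_{θ₂}(x)| ≤ ṁ(x) ‖θ₁ − θ₂‖ for all θ₁, θ₂ ∈ V and all x with p_{θ₀}(x) > 0. -/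
open MeasureTheory Filter Set

/-- The GEV probability measure with parameter `θ`. -/
noncomputable def gevMeasure (θ : ℝ × ℝ × ℝ) : Measure ℝ :=
  MeasureTheory.volume.withDensity fun x => ENNReal.ofReal (gevDensity θ x)

/-- The modified criterion function `m_θ = 2 log((p_θ + p_{θ₀})/(2 p_{θ₀}))`
relative to the reference parameter `θ₀` (meaningful where `p_{θ₀} > 0`). -/
noncomputable def gevM (θ₀ θ : ℝ × ℝ × ℝ) (x : ℝ) : ℝ :=
  2 * Real.log ((gevDensity θ x + gevDensity θ₀ x) / (2 * gevDensity θ₀ x))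

/-!
In the Gumbel coordinate `l = -log u` the density is `σ⁻¹ exp (-exp (-l) - (γ + 1) l)`, and the
score, the derivative of `log p_θ(x)` in `θ`, is at most a constant times
`T = (1 + exp (-l)) (1 + exp (-γ l)) (1 + l ^ 2)`, uniformly near `θ₀`, also across `γ = 0`.

If `T p_θ ^ κ ≤ C`, then writing `p = p_θ`, `q = p_{θ₀}`, weighted AM-GM gives
`T p ≤ C p ^ (1 - κ) ≤ C q ^ (-κ) (p + q)`, so the derivative of `m_θ(x)` is bounded by a multiple
of `q(x) ^ (-κ)`. The bound `T p_θ ^ κ ≤ C` needs `κ (γ + 1) > max (-γ) 0` as `l → ∞` and any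
`κ > 0` as `l → -∞`, while `∫ q ^ (1 - 2κ) < ∞` needs `κ (γ + 1) < 1/2` as `l → ∞` and holds for
`κ < 1/2` as `l → -∞`. The two conditions at `+∞` are compatible exactly because `γ > -1/2`.

The same bound yields `p_θ(x) ≤ C (1 + γ z) ^ a` with `a = 1/κ > 1`. Hence the density, extended by
zero outside the support, remains differentiable in `θ` when an endpoint of the support crosses `x`,
and the mean value inequality applies on a whole ball around `θ₀`.
-/

open scoped Topology
open Real (exp log)

lemma abs_one_sub_exp_neg_sub_le (s : ℝ) : |1 - exp (-s) - s| ≤ s ^ 2 * (1 + exp (-s)) := by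
  have hexp : 0 < exp (-s) := Real.exp_pos _
  have hupper : 1 - exp (-s) ≤ s := by linarith [Real.add_one_le_exp (-s)]
  have hlower : s * exp (-s) ≤ 1 - exp (-s) := by
    have h := mul_le_mul_of_nonneg_right (Real.add_one_le_exp s) hexp.le
    rw [← Real.exp_add, add_neg_cancel, Real.exp_zero] at h
    linarith
  have hprod : s * (1 - exp (-s)) ≤ s ^ 2 * (1 + exp (-s)) := by
    rcases le_total 0 s with hs | hs <;> nlinarith [mul_nonneg (sq_nonneg s) hexp.le]
  rw [abs_le]
  constructor <;> nlinarith [mul_nonneg (sq_nonneg s) hexp.le]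

lemma mul_sub_mul_exp_le {K κ : ℝ} (hK : 0 < K) (hκ : 0 < κ) (t : ℝ) :
    K * t - κ * exp t ≤ K * log (K / κ) - K := by
  have h := Real.add_one_le_exp (t - log (K / κ))
  rw [Real.exp_sub, Real.exp_log (by positivity), le_div_iff₀ (by positivity)] at h
  have hmul : κ * ((t - log (K / κ) + 1) * (K / κ)) ≤ κ * exp t := by gcongr
  have hcancel : κ * ((t - log (K / κ) + 1) * (K / κ)) = K * (t - log (K / κ) + 1) := by field_simp
  linarith

lemma one_add_sq_le_mul_exp {δ l : ℝ} (hδ : 0 < δ) (hl : 0 ≤ l) :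
    1 + l ^ 2 ≤ (1 + 2 / δ ^ 2) * exp (δ * l) := by
  calc 1 + l ^ 2 ≤ 1 + l ^ 2 + (2 / δ ^ 2 + (δ * l) ^ 2 / 2) := by
        exact le_add_of_nonneg_right (by positivity)
    _ = (1 + 2 / δ ^ 2) * (1 + (δ * l) ^ 2 / 2) := by field_simp; ring
    _ ≤ (1 + 2 / δ ^ 2) * exp (δ * l) := by
        gcongr
        have hδl : 0 ≤ δ * l := by positivity
        linarith [Real.quadratic_le_exp_of_nonneg hδl]

lemma mul_le_mul_rpow_neg_mul_add {T P q κ C : ℝ} (hP : 0 < P) (hq : 0 < q) (hκ : 0 ≤ κ)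
    (hκ1 : κ ≤ 1) (hC : 0 ≤ C) (h : T * P ^ κ ≤ C) : T * P ≤ C * q ^ (-κ) * (P + q) := by
  have hamgm : P ^ (1 - κ) * q ^ κ ≤ P + q := by
    have h := Real.geom_mean_le_arith_mean2_weighted (sub_nonneg.2 hκ1) hκ hP.le hq.le (by ring)
    nlinarith
  have hPsplit : P ^ κ * P ^ (1 - κ) = P := by rw [← Real.rpow_add hP]; simp
  have hqcancel : q ^ (-κ) * q ^ κ = 1 := by rw [← Real.rpow_add hq]; simp
  calc T * P = T * P ^ κ * P ^ (1 - κ) := by rw [mul_assoc, hPsplit]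
    _ ≤ C * P ^ (1 - κ) := by gcongr
    _ = C * q ^ (-κ) * (P ^ (1 - κ) * q ^ κ) := by linear_combination -C * P ^ (1 - κ) * hqcancel
    _ ≤ C * q ^ (-κ) * (P + q) := by gcongr

lemma lintegral_ofReal_lt_top_of_le_exp {f : ℝ → ℝ} {K₁ K₂ η c : ℝ} (hη : 0 < η)
    (hleft : ∀ l < c, f l ≤ K₁ * exp l) (hright : ∀ l, c ≤ l → f l ≤ K₂ * exp (-η * l)) :
    ∫⁻ l, ENNReal.ofReal (f l) < ⊤ := by
  have hleftInt : IntegrableOn (fun l => K₁ * exp l) (Iio c) :=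
    ((integrableOn_exp_Iic c).mono_set Iio_subset_Iic_self).const_mul K₁
  have hrightInt : IntegrableOn (fun l => K₂ * exp (-η * l)) (Ici c) :=
    ((integrableOn_Ici_iff_integrableOn_Ioi (by simp)).2
      (integrableOn_exp_mul_Ioi (neg_lt_zero.2 hη) c)).const_mul K₂
  rw [← lintegral_add_compl _ (measurableSet_Iio (a := c)), compl_Iio]
  exact ENNReal.add_lt_top.2
    ⟨(setLIntegral_mono' measurableSet_Iio fun l hl =>
        ENNReal.ofReal_le_ofReal (hleft l hl)).trans_lt hleftInt.lintegral_lt_top,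
      (setLIntegral_mono' measurableSet_Ici fun l hl =>
        ENNReal.ofReal_le_ofReal (hright l hl)).trans_lt hrightInt.lintegral_lt_top⟩

lemma hasFDerivAt_zero_of_abs_le_max_rpow {E : Type*} [NormedAddCommGroup E] [NormedSpace ℝ E]
    {f w : E → ℝ} {e : E} {a C : ℝ} (ha : 1 < a) (hw : DifferentiableAt ℝ w e) (hwe : w e ≤ 0)
    (hf : ∀ᶠ e' in 𝓝 e, |f e'| ≤ C * max (w e') 0 ^ a) : HasFDerivAt f (0 : E →L[ℝ] ℝ) e := by
  have hmax : max (w e) 0 = 0 := max_eq_right hwe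
  have hfe : f e = 0 := by
    simpa [hmax, Real.zero_rpow (by positivity : a ≠ 0)] using hf.self_of_nhds
  have hwO : (fun e' => max (w e') 0) =O[𝓝 e] fun e' => e' - e := by
    refine .trans (.of_bound' (.of_forall fun e' => ?_)) hw.hasFDerivAt.isBigO_sub
    simpa [hmax] using abs_max_sub_max_le_abs (w e') (w e) 0
  have htendsto : Tendsto (fun e' => max (w e') 0 ^ (a - 1)) (𝓝 e) (𝓝 0) := by
    have hcont : ContinuousAt (fun e' => max (w e') 0 ^ (a - 1)) e :=
      (hw.continuousAt.max continuousAt_const).rpow_const (.inr (by linarith))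
    simpa [ContinuousAt, hmax, Real.zero_rpow (by linarith : a - 1 ≠ 0)] using hcont
  have hpow : (fun e' => max (w e') 0 ^ a) =o[𝓝 e] fun e' => e' - e := by
    have hmul := hwO.norm_right.mul_isLittleO ((Asymptotics.isLittleO_one_iff ℝ).2 htendsto)
    refine .of_norm_right (hmul.congr (fun e' => ?_) fun e' => mul_one _)
    rw [← Real.rpow_one_add' (le_max_right _ _) (by linarith), add_sub_cancel]
  refine .of_isLittleO ?_
  simp only [hfe, sub_zero, zero_apply]
  exact (Asymptotics.IsBigO.of_bound C (hf.mono fun e' he' => by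
    rwa [Real.norm_eq_abs, Real.norm_of_nonneg (by positivity)])).trans_isLittleO hpow

lemma abs_log_sub_log_le_of_norm_fderiv_le {E : Type*} [NormedAddCommGroup E] [NormedSpace ℝ E]
    {s : Set E} {P : E → ℝ} {q M : ℝ} (hs : Convex ℝ s) (hq : 0 < q) (hP : ∀ e ∈ s, 0 ≤ P e)
    (hderiv : ∀ e ∈ s, ∃ P' : E →L[ℝ] ℝ, HasFDerivAt P P' e ∧ ‖P'‖ ≤ M * (P e + q))
    {a b : E} (ha : a ∈ s) (hb : b ∈ s) :
    |log ((P a + q) / (2 * q)) - log ((P b + q) / (2 * q))| ≤ M * ‖a - b‖ := by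
  have hsum : ∀ e ∈ s, 0 < P e + q := fun e he => add_pos_of_nonneg_of_pos (hP e he) hq
  choose! P' hP' hbound using hderiv
  have hlog : ‖log (P a + q) - log (P b + q)‖ ≤ M * ‖a - b‖ := by
    refine hs.norm_image_sub_le_of_norm_hasFDerivWithin_le
      (fun e he => (((hP' e he).add_const q).log (hsum e he).ne').hasFDerivWithinAt)
      (fun e he => ?_) hb ha
    rw [norm_smul, Real.norm_of_nonneg (inv_nonneg.2 (hsum e he).le),
      inv_mul_le_iff₀ (hsum e he), mul_comm]
    exact hbound e he
  rwa [Real.log_div (hsum a ha).ne' (by positivity), Real.log_div (hsum b hb).ne' (by positivity),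
    sub_sub_sub_cancel_right]

/-- The slope `log (1 + y) / y` of `log (1 + ·)` between `0` and `y`, with the value `1` at `y = 0`.
It makes the passage through the shape parameter `γ = 0` smooth. -/
noncomputable def logSlope : ℝ → ℝ := dslope (fun y => log (1 + y)) 0

lemma hasDerivAt_log_one_add {y : ℝ} (hy : 0 < 1 + y) :
    HasDerivAt (fun y => log (1 + y)) (1 + y)⁻¹ y := by
  simpa using ((hasDerivAt_id y).const_add 1).log hy.ne'

lemma logSlope_zero : logSlope 0 = 1 := by
  rw [logSlope, dslope_same, (hasDerivAt_log_one_add (by norm_num)).deriv]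
  norm_num

lemma mul_logSlope (y : ℝ) : y * logSlope y = log (1 + y) := by
  simpa [logSlope] using sub_smul_dslope (fun y => log (1 + y)) 0 y

lemma analyticAt_logSlope_zero : AnalyticAt ℝ logSlope 0 := by
  have h : AnalyticAt ℝ (fun y => log (1 + y)) 0 := by
    refine AnalyticAt.log (by fun_prop) (by norm_num)
  obtain ⟨p, hp⟩ := h
  exact hp.has_fpower_series_dslope_fslope.analyticAt

lemma differentiableAt_logSlope {y : ℝ} (hy : 0 < 1 + y) : DifferentiableAt ℝ logSlope y := by
  rcases eq_or_ne y 0 with rfl | hy0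
  · exact analyticAt_logSlope_zero.differentiableAt
  · exact (differentiableAt_dslope_of_ne hy0).2 (hasDerivAt_log_one_add hy).differentiableAt

lemma logSlope_add_mul_deriv {y : ℝ} (hy : 0 < 1 + y) :
    logSlope y + y * deriv logSlope y = (1 + y)⁻¹ := by
  have h := (hasDerivAt_id' y).mul (differentiableAt_logSlope hy).hasDerivAt
  rw [one_mul] at h
  exact h.unique ((hasDerivAt_log_one_add hy).congr_of_eventuallyEq (.of_forall mul_logSlope))

lemma inv_one_add_le_logSlope_mul {y : ℝ} (hy : 0 < 1 + y) :
    (1 + y)⁻¹ ≤ logSlope y * (1 + (1 + y)⁻¹) := by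
  have hinv : 0 < (1 + y)⁻¹ := inv_pos.2 hy
  rcases lt_trichotomy y 0 with hy0 | rfl | hy0
  · have hlog : y * logSlope y ≤ y * 1 := by
      rw [mul_logSlope]; linarith [Real.log_le_sub_one_of_pos hy]
    nlinarith [(mul_le_mul_left_of_neg hy0).1 hlog]
  · norm_num [logSlope_zero]
  · have hlog : y * (1 + y)⁻¹ ≤ y * logSlope y := by
      rw [mul_logSlope]
      refine le_of_eq_of_le ?_ (Real.one_sub_inv_le_log_of_pos hy)
      field_simp; ring
    nlinarith [le_of_mul_le_mul_left hlog hy0]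

lemma logSlope_pos {y : ℝ} (hy : 0 < 1 + y) : 0 < logSlope y :=
  pos_of_mul_pos_left ((inv_pos.2 hy).trans_le (inv_one_add_le_logSlope_mul hy)) (by positivity)

lemma abs_deriv_logSlope_le_of_ne_zero {y : ℝ} (hy : 0 < 1 + y) (hy0 : y ≠ 0) :
    |deriv logSlope y| ≤ logSlope y ^ 2 * (1 + (1 + y)⁻¹) := by
  have hexp : exp (-(y * logSlope y)) = (1 + y)⁻¹ := by
    rw [mul_logSlope, Real.exp_neg, Real.exp_log hy]
  have hderiv : y ^ 2 * deriv logSlope y = 1 - (1 + y)⁻¹ - y * logSlope y := by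
    have h := congrArg (y * ·) (logSlope_add_mul_deriv hy)
    simp only [mul_add] at h
    linear_combination h + mul_inv_cancel₀ hy.ne'
  have h := abs_one_sub_exp_neg_sub_le (y * logSlope y)
  rw [hexp, ← hderiv, abs_mul, abs_of_nonneg (sq_nonneg y), mul_pow, mul_assoc] at h
  exact le_of_mul_le_mul_left h (by positivity)

lemma abs_deriv_logSlope_le {y : ℝ} (hy : 0 < 1 + y) :
    |deriv logSlope y| ≤ logSlope y ^ 2 * (1 + (1 + y)⁻¹) := by
  rcases eq_or_ne y 0 with rfl | hy0
  · have hslope := analyticAt_logSlope_zero.continuousAt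
    have hinv : ContinuousAt (fun y : ℝ => (1 + y)⁻¹) 0 :=
      ContinuousAt.inv₀ (by fun_prop) (by norm_num)
    have hright : ContinuousAt (fun y => logSlope y ^ 2 * (1 + (1 + y)⁻¹)) 0 :=
      (hslope.pow 2).mul (continuousAt_const.add hinv)
    refine le_of_tendsto_of_tendsto
      (analyticAt_logSlope_zero.deriv.continuousAt.abs.tendsto.mono_left nhdsWithin_le_nhds)
      (hright.tendsto.mono_left (nhdsWithin_le_nhds (s := {0}ᶜ))) ?_
    filter_upwards [self_mem_nhdsWithin, nhdsWithin_le_nhds (Ioi_mem_nhds (neg_lt_zero.2 one_pos))]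
      with y hne hgt
    exact abs_deriv_logSlope_le_of_ne_zero (neg_lt_iff_pos_add'.1 hgt) hne
  · exact abs_deriv_logSlope_le_of_ne_zero hy hy0

/-- The map `z ↦ log (1 + γ z) / γ = -log (u_γ z)`, read as `z` for `γ = 0`, which carries the
standard GEV distribution of shape `γ` to the standard Gumbel distribution. -/
noncomputable def gevToGumbel (γ z : ℝ) : ℝ := z * logSlope (γ * z)

/-- The inverse of `gevToGumbel γ`, defined on the whole line. -/
noncomputable def gumbelToGEV (γ l : ℝ) : ℝ := if γ = 0 then l else (exp (γ * l) - 1) / γ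

section GumbelTransform

variable {γ z : ℝ}

lemma gevToGumbel_zero_left : gevToGumbel 0 z = z := by simp [gevToGumbel, logSlope_zero]

lemma mul_gevToGumbel : γ * gevToGumbel γ z = log (1 + γ * z) := by
  rw [gevToGumbel, ← mul_assoc, mul_logSlope]

lemma exp_mul_gevToGumbel (h : 0 < 1 + γ * z) : exp (γ * gevToGumbel γ z) = 1 + γ * z := by
  rw [mul_gevToGumbel, Real.exp_log h]

lemma exp_neg_mul_gevToGumbel (h : 0 < 1 + γ * z) :
    exp (-(γ * gevToGumbel γ z)) = (1 + γ * z)⁻¹ := by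
  rw [Real.exp_neg, exp_mul_gevToGumbel h]

lemma gevToGumbel_nonpos (h : 0 < 1 + γ * z) (hz : z ≤ 0) : gevToGumbel γ z ≤ 0 :=
  mul_nonpos_of_nonpos_of_nonneg hz (logSlope_pos h).le

lemma gevU_eq_exp_neg_gevToGumbel (h : 0 < 1 + γ * z) : gevU γ z = exp (-gevToGumbel γ z) := by
  rcases eq_or_ne γ 0 with rfl | hγ
  · simp [gevU, gevToGumbel_zero_left]
  · rw [gevU, if_neg hγ, Real.rpow_def_of_pos h, ← mul_gevToGumbel]
    field_simp

lemma one_add_mul_gumbelToGEV (γ l : ℝ) : 1 + γ * gumbelToGEV γ l = exp (γ * l) := by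
  rcases eq_or_ne γ 0 with rfl | hγ
  · simp
  · rw [gumbelToGEV, if_neg hγ, mul_div_cancel₀ _ hγ, add_sub_cancel]

lemma gevToGumbel_gumbelToGEV (γ l : ℝ) : gevToGumbel γ (gumbelToGEV γ l) = l := by
  rcases eq_or_ne γ 0 with rfl | hγ
  · simp [gumbelToGEV, gevToGumbel_zero_left]
  · apply mul_left_cancel₀ hγ
    rw [mul_gevToGumbel, one_add_mul_gumbelToGEV, Real.log_exp]

lemma gumbelToGEV_gevToGumbel (h : 0 < 1 + γ * z) : gumbelToGEV γ (gevToGumbel γ z) = z := by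
  rcases eq_or_ne γ 0 with rfl | hγ
  · simp [gumbelToGEV, gevToGumbel_zero_left]
  · rw [gumbelToGEV, if_neg hγ, exp_mul_gevToGumbel h, add_sub_cancel_left,
      mul_div_cancel_left₀ _ hγ]

lemma hasDerivAt_gumbelToGEV (γ l : ℝ) : HasDerivAt (gumbelToGEV γ) (exp (γ * l)) l := by
  unfold gumbelToGEV
  rcases eq_or_ne γ 0 with rfl | hγ
  · simpa using hasDerivAt_id' l
  · simp only [if_neg hγ]
    refine ((((hasDerivAt_id' l).const_mul γ).exp.sub_const 1).div_const γ).congr_deriv ?_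
    field_simp

lemma strictMono_gumbelToGEV (γ : ℝ) : StrictMono (gumbelToGEV γ) :=
  strictMono_of_hasDerivAt_pos (hasDerivAt_gumbelToGEV γ) fun _ => Real.exp_pos _

lemma abs_mul_inv_le_abs_gevToGumbel_mul (h : 0 < 1 + γ * z) :
    |z| * (1 + γ * z)⁻¹ ≤ |gevToGumbel γ z| * (1 + (1 + γ * z)⁻¹) := by
  rw [gevToGumbel, abs_mul, abs_of_pos (logSlope_pos h), mul_assoc]
  gcongr
  exact inv_one_add_le_logSlope_mul h

lemma abs_sq_mul_deriv_logSlope_le (h : 0 < 1 + γ * z) :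
    |z ^ 2 * deriv logSlope (γ * z)| ≤ gevToGumbel γ z ^ 2 * (1 + (1 + γ * z)⁻¹) := by
  rw [gevToGumbel, abs_mul, abs_of_nonneg (sq_nonneg z), mul_pow, mul_assoc]
  gcongr
  exact abs_deriv_logSlope_le h

lemma hasFDerivAt_gevToGumbel {E : Type*} [NormedAddCommGroup E] [NormedSpace ℝ E]
    {g ζ : E → ℝ} {g' ζ' : E →L[ℝ] ℝ} {e : E} (hg : HasFDerivAt g g' e)
    (hζ : HasFDerivAt ζ ζ' e) (h : 0 < 1 + g e * ζ e) :
    HasFDerivAt (fun e => gevToGumbel (g e) (ζ e))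
      ((ζ e ^ 2 * deriv logSlope (g e * ζ e)) • g' + (1 + g e * ζ e)⁻¹ • ζ') e := by
  have hslope := (differentiableAt_logSlope h).hasDerivAt.comp_hasFDerivAt e (hg.mul hζ)
  refine (hζ.mul hslope).congr_fderiv ?_
  ext v
  simp only [← logSlope_add_mul_deriv h, Function.comp_apply, Pi.mul_apply, add_apply,
    smul_apply, smul_eq_mul]
  ring

end GumbelTransform

/-- The GEV density as a function of the Gumbel coordinate `l = -log u`. -/
noncomputable def gevDensityOfGumbel (γ σ l : ℝ) : ℝ := σ⁻¹ * exp (-exp (-l) - (γ + 1) * l)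

/-- The quantity `1 + γ z`, `z = (x - μ) / σ`, whose positivity describes the support of `P_θ`. -/
noncomputable def gevArg (θ : ℝ × ℝ × ℝ) (x : ℝ) : ℝ := 1 + θ.1 * ((x - θ.2.1) / θ.2.2)

/-- The Gumbel coordinate `-log (u_γ ((x - μ) / σ))` of the observation `x` under `θ`. -/
noncomputable def gumbelCoord (θ : ℝ × ℝ × ℝ) (x : ℝ) : ℝ :=
  gevToGumbel θ.1 ((x - θ.2.1) / θ.2.2)

/-- The observation with Gumbel coordinate `l` under `θ`. -/
noncomputable def gumbelPoint (θ : ℝ × ℝ × ℝ) (l : ℝ) : ℝ := θ.2.1 + θ.2.2 * gumbelToGEV θ.1 l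

section Density

variable {θ : ℝ × ℝ × ℝ} {x : ℝ}

lemma gevDensityOfGumbel_pos {σ : ℝ} (hσ : 0 < σ) (γ l : ℝ) : 0 < gevDensityOfGumbel γ σ l := by
  unfold gevDensityOfGumbel; positivity

lemma gevDensityOfGumbel_rpow {σ : ℝ} (hσ : 0 < σ) (γ l κ : ℝ) :
    gevDensityOfGumbel γ σ l ^ κ = σ⁻¹ ^ κ * exp (κ * (-exp (-l) - (γ + 1) * l)) := by
  rw [gevDensityOfGumbel, Real.mul_rpow (by positivity) (by positivity), ← Real.exp_mul, mul_comm κ]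

lemma mul_gevArg (hσ : θ.2.2 ≠ 0) : θ.2.2 * gevArg θ x = θ.2.2 + θ.1 * (x - θ.2.1) := by
  rw [gevArg]; field_simp

lemma gevDensity_eq_gevDensityOfGumbel (hσ : 0 < θ.2.2) (hx : 0 < gevArg θ x) :
    gevDensity θ x = gevDensityOfGumbel θ.1 θ.2.2 (gumbelCoord θ x) := by
  have hsupp : 0 < θ.2.2 + θ.1 * (x - θ.2.1) := mul_gevArg hσ.ne' ▸ mul_pos hσ hx
  rw [gevDensity, if_pos hsupp, gevU_eq_exp_neg_gevToGumbel hx, gevDensityOfGumbel, mul_assoc,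
    ← Real.exp_mul, ← Real.exp_add, gumbelCoord]
  ring_nf

lemma gevDensity_eq_zero (hσ : 0 < θ.2.2) (hx : gevArg θ x ≤ 0) : gevDensity θ x = 0 := by
  rw [gevDensity, if_neg]
  rw [← mul_gevArg hσ.ne', not_lt]
  exact mul_nonpos_of_nonneg_of_nonpos hσ.le hx

lemma gevDensity_pos_iff (hσ : 0 < θ.2.2) : 0 < gevDensity θ x ↔ 0 < gevArg θ x := by
  refine ⟨fun h => ?_, fun h => ?_⟩
  · contrapose! h
    exact (gevDensity_eq_zero hσ h).le
  · rw [gevDensity_eq_gevDensityOfGumbel hσ h]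
    exact gevDensityOfGumbel_pos hσ _ _

lemma gevDensity_nonneg (hσ : 0 < θ.2.2) (x : ℝ) : 0 ≤ gevDensity θ x := by
  rcases le_or_gt (gevArg θ x) 0 with hx | hx
  · exact (gevDensity_eq_zero hσ hx).ge
  · exact ((gevDensity_pos_iff hσ).2 hx).le

lemma measurable_gevU (γ : ℝ) : Measurable (gevU γ) := by
  unfold gevU
  split_ifs <;> fun_prop

lemma measurable_gevDensity (θ : ℝ × ℝ × ℝ) : Measurable (gevDensity θ) := by
  have hU := measurable_gevU θ.1
  exact Measurable.ite (measurableSet_lt measurable_const (by fun_prop)) (by fun_prop)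
    measurable_const

lemma differentiableAt_gevArg (hσ : θ.2.2 ≠ 0) (x : ℝ) : DifferentiableAt ℝ (gevArg · x) θ := by
  unfold gevArg
  fun_prop (disch := assumption)

end Density

section GumbelPoint

variable {θ : ℝ × ℝ × ℝ}

lemma strictMono_gumbelPoint (hσ : 0 < θ.2.2) : StrictMono (gumbelPoint θ) :=
  ((strictMono_gumbelToGEV θ.1).const_mul hσ).const_add θ.2.1

lemma standardize_gumbelPoint (hσ : θ.2.2 ≠ 0) (l : ℝ) :
    (gumbelPoint θ l - θ.2.1) / θ.2.2 = gumbelToGEV θ.1 l := by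
  rw [gumbelPoint, add_sub_cancel_left, mul_div_cancel_left₀ _ hσ]

lemma gevDensity_gumbelPoint (hσ : 0 < θ.2.2) (l : ℝ) :
    gevDensity θ (gumbelPoint θ l) = gevDensityOfGumbel θ.1 θ.2.2 l := by
  have hz := standardize_gumbelPoint hσ.ne' l
  have hx : 0 < gevArg θ (gumbelPoint θ l) := by
    rw [gevArg, hz, one_add_mul_gumbelToGEV]
    exact Real.exp_pos _
  rw [gevDensity_eq_gevDensityOfGumbel hσ hx, gumbelCoord, hz, gevToGumbel_gumbelToGEV]

lemma gumbelPoint_gumbelCoord {x : ℝ} (hσ : θ.2.2 ≠ 0) (hx : 0 < gevArg θ x) :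
    gumbelPoint θ (gumbelCoord θ x) = x := by
  rw [gumbelPoint, gumbelCoord, gumbelToGEV_gevToGumbel hx]
  field_simp
  ring

lemma hasDerivAt_gumbelPoint (θ : ℝ × ℝ × ℝ) (l : ℝ) :
    HasDerivAt (gumbelPoint θ) (θ.2.2 * exp (θ.1 * l)) l :=
  ((hasDerivAt_gumbelToGEV θ.1 l).const_mul θ.2.2).const_add θ.2.1

lemma gumbelPoint_lt_loc {l : ℝ} (hσ : 0 < θ.2.2) (hl : l < 0) : gumbelPoint θ l < θ.2.1 := by
  simpa [gumbelPoint, gumbelToGEV] using strictMono_gumbelPoint hσ hl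

lemma gumbelCoord_nonpos {x : ℝ} (hσ : 0 < θ.2.2) (hx : 0 < gevArg θ x) (hxμ : x ≤ θ.2.1) :
    gumbelCoord θ x ≤ 0 :=
  gevToGumbel_nonpos hx (div_nonpos_of_nonpos_of_nonneg (sub_nonpos.2 hxμ) hσ.le)

end GumbelPoint

/-- The coordinate functional `dγ` on the parameter space. -/
abbrev dShape : ℝ × ℝ × ℝ →L[ℝ] ℝ := .fst ℝ ℝ (ℝ × ℝ)

/-- The coordinate functional `dμ` on the parameter space. -/
abbrev dLoc : ℝ × ℝ × ℝ →L[ℝ] ℝ := .comp (.fst ℝ ℝ ℝ) (.snd ℝ ℝ (ℝ × ℝ))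

/-- The coordinate functional `dσ` on the parameter space. -/
abbrev dScale : ℝ × ℝ × ℝ →L[ℝ] ℝ := .comp (.snd ℝ ℝ ℝ) (.snd ℝ ℝ (ℝ × ℝ))

/-- The derivative of `θ ↦ gumbelCoord θ x`. -/
noncomputable def gumbelCoordDeriv (θ : ℝ × ℝ × ℝ) (x : ℝ) : ℝ × ℝ × ℝ →L[ℝ] ℝ :=
  (((x - θ.2.1) / θ.2.2) ^ 2 * deriv logSlope (θ.1 * ((x - θ.2.1) / θ.2.2))) • dShape -
    (gevArg θ x)⁻¹ • θ.2.2⁻¹ • (dLoc + ((x - θ.2.1) / θ.2.2) • dScale)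

/-- The score: the derivative of `θ ↦ log p_θ(x)` inside the support. -/
noncomputable def gevScore (θ : ℝ × ℝ × ℝ) (x : ℝ) : ℝ × ℝ × ℝ →L[ℝ] ℝ :=
  (exp (-gumbelCoord θ x) - (θ.1 + 1)) • gumbelCoordDeriv θ x - gumbelCoord θ x • dShape -
    θ.2.2⁻¹ • dScale

/-- The growth of the score in the Gumbel coordinate, see `norm_gevScore_le`. -/
noncomputable def scoreWeight (γ l : ℝ) : ℝ := (1 + exp (-l)) * (1 + exp (-(γ * l))) * (1 + l ^ 2)

section Score

variable {θ : ℝ × ℝ × ℝ} {x : ℝ}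

lemma norm_dShape_le : ‖dShape‖ ≤ 1 := ContinuousLinearMap.norm_fst_le ..

lemma norm_dLoc_le : ‖dLoc‖ ≤ 1 :=
  dLoc.opNorm_le_bound zero_le_one fun v => by
    simpa using (norm_fst_le v.2).trans (norm_snd_le v)

lemma norm_dScale_le : ‖dScale‖ ≤ 1 :=
  dScale.opNorm_le_bound zero_le_one fun v => by
    simpa using (norm_snd_le v.2).trans (norm_snd_le v)

lemma hasFDerivAt_standardize (hσ : θ.2.2 ≠ 0) (x : ℝ) :
    HasFDerivAt (fun θ : ℝ × ℝ × ℝ => (x - θ.2.1) / θ.2.2)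
      (-(θ.2.2⁻¹ • (dLoc + ((x - θ.2.1) / θ.2.2) • dScale))) θ := by
  have hinv := (hasDerivAt_inv hσ).comp_hasFDerivAt θ (dScale.hasFDerivAt (x := θ))
  refine ((dLoc.hasFDerivAt.const_sub x).mul hinv).congr_fderiv ?_
  match_scalars <;> simp [field]

lemma hasFDerivAt_gumbelCoord (hσ : θ.2.2 ≠ 0) (hx : 0 < gevArg θ x) :
    HasFDerivAt (gumbelCoord · x) (gumbelCoordDeriv θ x) θ := by
  have hz := hasFDerivAt_standardize hσ x
  refine (hasFDerivAt_gevToGumbel dShape.hasFDerivAt hz hx).congr_fderiv ?_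
  rw [smul_neg, ← sub_eq_add_neg]
  rfl

lemma eventually_scale_pos (hσ : 0 < θ.2.2) : ∀ᶠ θ' in 𝓝 θ, 0 < θ'.2.2 :=
  (isOpen_lt continuous_const (continuous_snd.comp continuous_snd)).mem_nhds hσ

lemma hasFDerivAt_gevDensity (hσ : 0 < θ.2.2) (hx : 0 < gevArg θ x) :
    HasFDerivAt (gevDensity · x) (gevDensity θ x • gevScore θ x) θ := by
  have hnear : (gevDensity · x) =ᶠ[𝓝 θ]
      fun θ => gevDensityOfGumbel θ.1 θ.2.2 (gumbelCoord θ x) := by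
    filter_upwards [eventually_scale_pos hσ,
      (differentiableAt_gevArg hσ.ne' x).continuousAt.eventually_const_lt hx] with θ' hσ' hx'
    exact gevDensity_eq_gevDensityOfGumbel hσ' hx'
  have hl := hasFDerivAt_gumbelCoord hσ.ne' hx
  have hinv := (hasDerivAt_inv hσ.ne').comp_hasFDerivAt θ (dScale.hasFDerivAt (x := θ))
  have hexponent := hl.neg.exp.neg.sub ((dShape.hasFDerivAt.add_const 1).mul hl)
  refine ((hinv.mul hexponent.exp).congr_of_eventuallyEq hnear).congr_fderiv ?_
  rw [gevDensity_eq_gevDensityOfGumbel hσ hx, gevScore, gevDensityOfGumbel]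
  generalize gumbelCoordDeriv θ x = l'
  match_scalars <;> simp only [Function.comp_apply, Pi.neg_apply, Pi.sub_apply, Pi.mul_apply,
    mul_neg, mul_one] <;> field_simp

lemma exp_neg_mul_gumbelCoord (hx : 0 < gevArg θ x) :
    exp (-(θ.1 * gumbelCoord θ x)) = (gevArg θ x)⁻¹ :=
  exp_neg_mul_gevToGumbel hx

lemma norm_gumbelCoordDeriv_le (hσ : 0 < θ.2.2) (hx : 0 < gevArg θ x) :
    ‖gumbelCoordDeriv θ x‖ ≤ (1 + exp (-(θ.1 * gumbelCoord θ x))) *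
      (gumbelCoord θ x ^ 2 + θ.2.2⁻¹ * (1 + |gumbelCoord θ x|)) := by
  rw [exp_neg_mul_gumbelCoord hx]
  set z := (x - θ.2.1) / θ.2.2
  set l := gumbelCoord θ x
  set w := gevArg θ x
  have hshape : |z ^ 2 * deriv logSlope (θ.1 * z)| ≤ l ^ 2 * (1 + w⁻¹) :=
    abs_sq_mul_deriv_logSlope_le hx
  have hz : |z| * w⁻¹ ≤ |l| * (1 + w⁻¹) := abs_mul_inv_le_abs_gevToGumbel_mul hx
  have hlocScale : ‖dLoc + z • dScale‖ ≤ 1 + |z| := by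
    refine (norm_add_le _ _).trans (add_le_add norm_dLoc_le ?_)
    rw [norm_smul, Real.norm_eq_abs]
    exact mul_le_of_le_one_right (abs_nonneg z) norm_dScale_le
  calc ‖gumbelCoordDeriv θ x‖
      ≤ |z ^ 2 * deriv logSlope (θ.1 * z)| * ‖dShape‖ +
          w⁻¹ * (θ.2.2⁻¹ * ‖dLoc + z • dScale‖) := by
        refine (norm_sub_le _ _).trans_eq ?_
        rw [norm_smul, norm_smul, norm_smul, Real.norm_eq_abs, Real.norm_of_nonneg (by positivity),
          Real.norm_of_nonneg (by positivity)]
    _ ≤ l ^ 2 * (1 + w⁻¹) * 1 + w⁻¹ * (θ.2.2⁻¹ * (1 + |z|)) := by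
        gcongr
        exact norm_dShape_le
    _ = l ^ 2 * (1 + w⁻¹) + θ.2.2⁻¹ * (w⁻¹ + |z| * w⁻¹) := by ring
    _ ≤ l ^ 2 * (1 + w⁻¹) + θ.2.2⁻¹ * ((1 + w⁻¹) + |l| * (1 + w⁻¹)) := by
        gcongr _ + _ * (?_ + ?_)
        exact le_add_of_nonneg_left zero_le_one
    _ = (1 + w⁻¹) * (l ^ 2 + θ.2.2⁻¹ * (1 + |l|)) := by ring

lemma one_add_sq_le_scoreWeight (γ l : ℝ) : 1 + l ^ 2 ≤ scoreWeight γ l := by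
  refine le_mul_of_one_le_left (by positivity) ?_
  exact one_le_mul_of_one_le_of_one_le (by simp [Real.exp_nonneg]) (by simp [Real.exp_nonneg])

lemma exp_neg_mul_le_scoreWeight (γ l : ℝ) : exp (-(γ * l)) ≤ scoreWeight γ l := by
  rw [scoreWeight, mul_right_comm]
  refine (le_add_of_nonneg_left zero_le_one).trans (le_mul_of_one_le_left (by positivity) ?_)
  exact one_le_mul_of_one_le_of_one_le (by simp [Real.exp_nonneg]) (by simp [sq_nonneg])

lemma norm_gevScore_le (hσ : 0 < θ.2.2) (hx : 0 < gevArg θ x) :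
    ‖gevScore θ x‖ ≤
      3 * (|θ.1| + 1) * (1 + θ.2.2⁻¹) * scoreWeight θ.1 (gumbelCoord θ x) := by
  have hcoord := norm_gumbelCoordDeriv_le hσ hx
  have hweight := one_add_sq_le_scoreWeight θ.1 (gumbelCoord θ x)
  set l := gumbelCoord θ x
  have habs : |l| ≤ 1 + l ^ 2 := by rw [← sq_abs l]; nlinarith [sq_nonneg (|l| - 1)]
  have hcoeff : |exp (-l) - (θ.1 + 1)| ≤ (|θ.1| + 1) * (1 + exp (-l)) := by
    have hexp := Real.exp_pos (-l)
    rw [abs_le]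
    constructor <;> nlinarith [neg_abs_le θ.1, le_abs_self θ.1, mul_nonneg (abs_nonneg θ.1) hexp.le]
  have hinv : 0 < θ.2.2⁻¹ := inv_pos.2 hσ
  calc ‖gevScore θ x‖
      ≤ |exp (-l) - (θ.1 + 1)| * ‖gumbelCoordDeriv θ x‖ + |l| * ‖dShape‖ +
          θ.2.2⁻¹ * ‖dScale‖ := by
        refine (norm_sub_le _ _).trans (add_le_add ((norm_sub_le _ _).trans_eq ?_) ?_)
        · rw [norm_smul, norm_smul, Real.norm_eq_abs, Real.norm_eq_abs]
        · rw [norm_smul, Real.norm_of_nonneg hinv.le]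
    _ ≤ (|θ.1| + 1) * (1 + exp (-l)) * ((1 + exp (-(θ.1 * l))) * (l ^ 2 + θ.2.2⁻¹ * (1 + |l|))) +
          |l| * 1 + θ.2.2⁻¹ * 1 := by
        gcongr
        exacts [norm_dShape_le, norm_dScale_le]
    _ ≤ (|θ.1| + 1) * (1 + exp (-l)) *
            ((1 + exp (-(θ.1 * l))) * ((1 + l ^ 2) + θ.2.2⁻¹ * (2 * (1 + l ^ 2)))) +
          scoreWeight θ.1 l + θ.2.2⁻¹ * scoreWeight θ.1 l := by
        gcongr <;> nlinarith [sq_nonneg l]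
    _ = ((|θ.1| + 1) * (1 + 2 * θ.2.2⁻¹) + 1 + θ.2.2⁻¹) * scoreWeight θ.1 l := by
        rw [scoreWeight]; ring
    _ ≤ 3 * (|θ.1| + 1) * (1 + θ.2.2⁻¹) * scoreWeight θ.1 l := by
        gcongr ?_ * _
        · exact le_trans (by positivity) hweight
        · nlinarith [mul_nonneg (abs_nonneg θ.1) hinv.le, abs_nonneg θ.1]

end Score

section WeightedDensity

variable {κ s γ σ l : ℝ}

lemma gevDensityOfGumbel_rpow_le (hs : 0 < s) (hσ : s ≤ σ) (hκ : 0 ≤ κ) (γ l : ℝ) :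
    gevDensityOfGumbel γ σ l ^ κ ≤ s⁻¹ ^ κ * exp (κ * (-exp (-l) - (γ + 1) * l)) := by
  have hσ0 : 0 < σ := hs.trans_le hσ
  rw [gevDensityOfGumbel_rpow hσ0]
  gcongr

lemma scoreWeight_le_exp_of_nonpos {Γ : ℝ} (hγ : |γ| ≤ Γ) (hl : l ≤ 0) :
    scoreWeight γ l ≤ 8 * exp ((2 + Γ) * -l) := by
  have hexp : 1 ≤ exp (-l) := Real.one_le_exp (by linarith)
  have hΓ : 0 ≤ Γ := (abs_nonneg γ).trans hγ
  have hexpΓ : 1 ≤ exp (Γ * -l) := Real.one_le_exp (mul_nonneg hΓ (by linarith))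
  have hshape : exp (-(γ * l)) ≤ exp (Γ * -l) := by
    gcongr
    nlinarith [le_abs_self γ]
  have hsq : 1 + l ^ 2 ≤ 2 * exp (-l) := by
    nlinarith [Real.quadratic_le_exp_of_nonneg (x := -l) (by linarith)]
  calc scoreWeight γ l ≤ (2 * exp (-l)) * (2 * exp (Γ * -l)) * (2 * exp (-l)) := by
        unfold scoreWeight
        gcongr <;> linarith
    _ = 8 * exp ((2 + Γ) * -l) := by
        rw [show (2 + Γ) * -l = -l + Γ * -l + -l by ring, Real.exp_add, Real.exp_add]
        ring

lemma exists_scoreWeight_mul_rpow_le_of_nonpos (hκ : 0 < κ) (hs : 0 < s) {Γ : ℝ} (hΓ : 0 ≤ Γ) :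
    ∃ C, 0 < C ∧ ∀ γ σ l, |γ| ≤ Γ → s ≤ σ → l ≤ 0 →
      scoreWeight γ l * gevDensityOfGumbel γ σ l ^ κ ≤ C := by
  set K := 2 + Γ + κ * (Γ + 1) with hK_def
  have hK : 0 < K := by positivity
  refine ⟨8 * s⁻¹ ^ κ * exp (K * log (K / κ) - K), by positivity, fun γ σ l hγ hσ hl => ?_⟩
  have hshape : κ * ((γ + 1) * -l) ≤ κ * ((Γ + 1) * -l) := by
    gcongr
    · linarith
    · exact (le_abs_self γ).trans hγ
  have hσ0 : 0 < σ := hs.trans_le hσ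
  calc scoreWeight γ l * gevDensityOfGumbel γ σ l ^ κ
      ≤ 8 * exp ((2 + Γ) * -l) * (s⁻¹ ^ κ * exp (κ * (-exp (-l) - (γ + 1) * l))) := by
        have := gevDensityOfGumbel_pos hσ0 γ l
        gcongr
        exacts [scoreWeight_le_exp_of_nonpos hγ hl, gevDensityOfGumbel_rpow_le hs hσ hκ.le γ l]
    _ = 8 * s⁻¹ ^ κ * exp ((2 + Γ) * -l + κ * (-exp (-l) - (γ + 1) * l)) := by
        rw [Real.exp_add]; ring
    _ ≤ 8 * s⁻¹ ^ κ * exp (K * log (K / κ) - K) := by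
        gcongr
        refine le_trans ?_ (mul_sub_mul_exp_le hK hκ (-l))
        rw [hK_def]
        linarith

lemma scoreWeight_le_exp_of_nonneg {δ : ℝ} (hδ : 0 < δ) (hl : 0 ≤ l) (γ : ℝ) :
    scoreWeight γ l ≤ 4 * (1 + 2 / δ ^ 2) * exp ((max (-γ) 0 + δ) * l) := by
  have hexp : exp (-l) ≤ 1 := Real.exp_le_one_iff.2 (by linarith)
  have hmax : 1 ≤ exp (max (-γ) 0 * l) := Real.one_le_exp (by positivity)
  have hshape : exp (-(γ * l)) ≤ exp (max (-γ) 0 * l) := by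
    rw [← neg_mul]
    gcongr
    exact le_max_left _ _
  calc scoreWeight γ l
      ≤ 2 * (2 * exp (max (-γ) 0 * l)) * ((1 + 2 / δ ^ 2) * exp (δ * l)) := by
        unfold scoreWeight
        gcongr ?_ * ?_ * ?_
        exacts [by linarith, by linarith, one_add_sq_le_mul_exp hδ hl]
    _ = 4 * (1 + 2 / δ ^ 2) * exp ((max (-γ) 0 + δ) * l) := by
        rw [add_mul _ δ, Real.exp_add]; ring

lemma exists_scoreWeight_mul_rpow_le_of_nonneg (hκ : 0 < κ) (hs : 0 < s) {δ : ℝ} (hδ : 0 < δ) :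
    ∃ C, ∀ γ σ l, max (-γ) 0 + δ ≤ κ * (γ + 1) → s ≤ σ → 0 ≤ l →
      scoreWeight γ l * gevDensityOfGumbel γ σ l ^ κ ≤ C := by
  refine ⟨4 * (1 + 2 / δ ^ 2) * s⁻¹ ^ κ, fun γ σ l hγ hσ hl => ?_⟩
  have hexponent : (max (-γ) 0 + δ) * l + κ * (-exp (-l) - (γ + 1) * l) ≤ 0 := by
    have hexp : 0 ≤ κ * exp (-l) := by positivity
    linarith [mul_le_mul_of_nonneg_right hγ hl]
  have hσ0 : 0 < σ := hs.trans_le hσ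
  calc scoreWeight γ l * gevDensityOfGumbel γ σ l ^ κ
      ≤ 4 * (1 + 2 / δ ^ 2) * exp ((max (-γ) 0 + δ) * l) *
          (s⁻¹ ^ κ * exp (κ * (-exp (-l) - (γ + 1) * l))) := by
        have := gevDensityOfGumbel_pos hσ0 γ l
        gcongr
        exacts [scoreWeight_le_exp_of_nonneg hδ hl γ, gevDensityOfGumbel_rpow_le hs hσ hκ.le γ l]
    _ = 4 * (1 + 2 / δ ^ 2) * s⁻¹ ^ κ *
          exp ((max (-γ) 0 + δ) * l + κ * (-exp (-l) - (γ + 1) * l)) := by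
        rw [Real.exp_add]; ring
    _ ≤ 4 * (1 + 2 / δ ^ 2) * s⁻¹ ^ κ :=
        mul_le_of_le_one_right (by positivity) (Real.exp_le_one_iff.2 hexponent)

end WeightedDensity

section Neighbourhood

variable {θ₀ : ℝ × ℝ × ℝ} {κ : ℝ}

lemma eventually_abs_shape_lt (θ₀ : ℝ × ℝ × ℝ) : ∀ᶠ θ in 𝓝 θ₀, |θ.1| < |θ₀.1| + 1 :=
  (isOpen_lt continuous_fst.abs continuous_const).mem_nhds (lt_add_one |θ₀.1|)

lemma eventually_half_scale_lt (hσ : 0 < θ₀.2.2) : ∀ᶠ θ in 𝓝 θ₀, θ₀.2.2 / 2 < θ.2.2 :=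
  (isOpen_lt continuous_const (continuous_snd.comp continuous_snd)).mem_nhds (half_lt_self hσ)

lemma exists_eventually_scoreWeight_mul_rpow_le_of_nonpos (hσ : 0 < θ₀.2.2) (hκ : 0 < κ) :
    ∃ C, 0 < C ∧ ∀ᶠ θ in 𝓝 θ₀, ∀ l ≤ 0,
      scoreWeight θ.1 l * gevDensityOfGumbel θ.1 θ.2.2 l ^ κ ≤ C := by
  obtain ⟨C, hC, hbound⟩ := exists_scoreWeight_mul_rpow_le_of_nonpos hκ (half_pos hσ)
    (Γ := |θ₀.1| + 1) (by positivity)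
  refine ⟨C, hC, ?_⟩
  filter_upwards [eventually_abs_shape_lt θ₀, eventually_half_scale_lt hσ] with θ hγ hscale l hl
  exact hbound _ _ l hγ.le hscale.le hl

lemma exists_eventually_scoreWeight_mul_rpow_le (hσ : 0 < θ₀.2.2) (hκ : 0 < κ)
    (hκγ : max (-θ₀.1) 0 < κ * (θ₀.1 + 1)) :
    ∃ C, 0 < C ∧ ∀ᶠ θ in 𝓝 θ₀, ∀ l,
      scoreWeight θ.1 l * gevDensityOfGumbel θ.1 θ.2.2 l ^ κ ≤ C := by
  obtain ⟨b, hb, hbκ⟩ := exists_between hκγ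
  obtain ⟨δ, hδ, rfl⟩ : ∃ δ, 0 < δ ∧ max (-θ₀.1) 0 + δ = b := ⟨_, sub_pos.2 hb, by ring⟩
  obtain ⟨C₁, hC₁, hneg⟩ := exists_eventually_scoreWeight_mul_rpow_le_of_nonpos hσ hκ
  obtain ⟨C₂, hpos⟩ := exists_scoreWeight_mul_rpow_le_of_nonneg hκ (half_pos hσ) hδ
  have hshape : ∀ᶠ θ : ℝ × ℝ × ℝ in 𝓝 θ₀, max (-θ.1) 0 + δ < κ * (θ.1 + 1) :=
    (isOpen_lt (by fun_prop) (by fun_prop)).mem_nhds hbκ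
  refine ⟨max C₁ C₂, lt_max_of_lt_left hC₁, ?_⟩
  filter_upwards [hneg, hshape, eventually_half_scale_lt hσ] with θ hneg hγ hscale l
  rcases le_total l 0 with hl | hl
  · exact le_max_of_le_left (hneg l hl)
  · exact le_max_of_le_right (hpos _ _ l hγ.le hscale.le hl)

lemma exists_tail_exponent {γ : ℝ} (hγ : -(1 / 2) < γ) :
    ∃ κ, 0 < κ ∧ κ < 1 ∧ max (-γ) 0 < κ * (γ + 1) ∧ 2 * (κ * (γ + 1)) < 1 := by
  have hγ1 : 0 < γ + 1 := by linarith
  obtain ⟨b, hb, hb'⟩ := exists_between (max_lt (neg_lt.1 hγ) one_half_pos)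
  have hb0 : 0 < b := (le_max_right _ _).trans_lt hb
  have hcancel : b / (γ + 1) * (γ + 1) = b := div_mul_cancel₀ b hγ1.ne'
  refine ⟨b / (γ + 1), by positivity, (div_lt_one hγ1).2 (by linarith), ?_, ?_⟩ <;> linarith

lemma exists_eventually_gevDensity_le_rpow (hγ : -(1 / 2) < θ₀.1) (hσ : 0 < θ₀.2.2) :
    ∃ a : ℝ, 1 < a ∧ ∃ C, ∀ᶠ θ in 𝓝 θ₀, ∀ x,
      gevDensity θ x ≤ C * max (gevArg θ x) 0 ^ a := by
  obtain ⟨κ, hκ, hκ1, hκγ, -⟩ := exists_tail_exponent hγ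
  obtain ⟨C, hC, hbound⟩ := exists_eventually_scoreWeight_mul_rpow_le hσ hκ hκγ
  refine ⟨κ⁻¹, (one_lt_inv₀ hκ).2 hκ1, C ^ κ⁻¹, ?_⟩
  filter_upwards [hbound, eventually_scale_pos hσ] with θ hbound hσ x
  rcases le_or_gt (gevArg θ x) 0 with hx | hx
  · rw [gevDensity_eq_zero hσ hx]
    positivity
  have hp : 0 < gevDensity θ x := (gevDensity_pos_iff hσ).2 hx
  have hpow : gevDensity θ x ^ κ ≤ C * gevArg θ x := by
    have hle := (mul_le_mul_of_nonneg_right (exp_neg_mul_le_scoreWeight θ.1 (gumbelCoord θ x))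
      (Real.rpow_nonneg hp.le κ)).trans
      (gevDensity_eq_gevDensityOfGumbel hσ hx ▸ hbound (gumbelCoord θ x))
    rwa [exp_neg_mul_gumbelCoord hx, inv_mul_le_iff₀ hx, mul_comm] at hle
  rw [max_eq_left hx.le, ← Real.mul_rpow hC.le hx.le, ← Real.rpow_rpow_inv hp.le hκ.ne']
  gcongr

lemma hasFDerivAt_gevDensity_of_gevArg_nonpos (hγ : -(1 / 2) < θ₀.1) (hσ : 0 < θ₀.2.2) {x : ℝ}
    (hx : gevArg θ₀ x ≤ 0) : HasFDerivAt (gevDensity · x) (0 : ℝ × ℝ × ℝ →L[ℝ] ℝ) θ₀ := by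
  obtain ⟨a, ha, C, hbound⟩ := exists_eventually_gevDensity_le_rpow hγ hσ
  refine hasFDerivAt_zero_of_abs_le_max_rpow ha (differentiableAt_gevArg hσ.ne' x) hx ?_ (C := C)
  filter_upwards [hbound, eventually_scale_pos hσ] with θ hbound hσ
  rw [abs_of_nonneg (gevDensity_nonneg hσ x)]
  exact hbound x

end Neighbourhood

/-- The exponent `κ` of `gevEnvelope` must be small in the left tail for square integrability and
large elsewhere to dominate the score, so the left tail gets its own exponent `1 / 4`. -/
noncomputable def envelopeExponent (κ : ℝ) (θ : ℝ × ℝ × ℝ) (x : ℝ) : ℝ :=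
  if x < gumbelPoint θ (-1) then 1 / 4 else κ

/-- The negative power `p_θ ^ (-κ)` of the density that dominates the derivatives of `m`, up to
a constant factor. -/
noncomputable def gevEnvelope (κ : ℝ) (θ : ℝ × ℝ × ℝ) (x : ℝ) : ℝ :=
  gevDensity θ x ^ (-envelopeExponent κ θ x)

section Envelope

variable {θ θ₀ : ℝ × ℝ × ℝ} {κ : ℝ}

lemma measurable_gevEnvelope (κ : ℝ) (θ : ℝ × ℝ × ℝ) : Measurable (gevEnvelope κ θ) :=
  (measurable_gevDensity θ).pow
    (Measurable.ite measurableSet_Iio measurable_const measurable_const).neg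

lemma gevEnvelope_nonneg (hσ : 0 < θ.2.2) (x : ℝ) : 0 ≤ gevEnvelope κ θ x :=
  Real.rpow_nonneg (gevDensity_nonneg hσ x) _

lemma exists_eventually_scoreWeight_mul_gevDensity_le (hσ : 0 < θ₀.2.2) (hκ : 0 < κ) (hκ1 : κ ≤ 1)
    (hκγ : max (-θ₀.1) 0 < κ * (θ₀.1 + 1)) :
    ∃ C, 0 < C ∧ ∀ᶠ θ in 𝓝 θ₀, ∀ x, 0 < gevDensity θ₀ x → 0 < gevArg θ x →
      scoreWeight θ.1 (gumbelCoord θ x) * gevDensity θ x ≤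
        C * gevEnvelope κ θ₀ x * (gevDensity θ x + gevDensity θ₀ x) := by
  obtain ⟨C₁, hC₁, hleft⟩ :=
    exists_eventually_scoreWeight_mul_rpow_le_of_nonpos (κ := 1 / 4) hσ (by norm_num)
  obtain ⟨C₂, -, hall⟩ := exists_eventually_scoreWeight_mul_rpow_le hσ hκ hκγ
  have hloc : ∀ᶠ θ : ℝ × ℝ × ℝ in 𝓝 θ₀, gumbelPoint θ₀ (-1) < θ.2.1 :=
    (isOpen_lt continuous_const (by fun_prop)).mem_nhds (gumbelPoint_lt_loc hσ (by norm_num))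
  refine ⟨max C₁ C₂, lt_max_of_lt_left hC₁, ?_⟩
  filter_upwards [hleft, hall, hloc, eventually_scale_pos hσ] with θ hleft hall hloc hσ' x hq hx
  have hP : 0 < gevDensity θ x := (gevDensity_pos_iff hσ').2 hx
  have hdens := gevDensity_eq_gevDensityOfGumbel hσ' hx
  rw [gevEnvelope, envelopeExponent]
  split_ifs with htail
  · refine mul_le_mul_rpow_neg_mul_add hP hq (by norm_num) (by norm_num) (by positivity) ?_
    rw [hdens]
    exact le_max_of_le_left (hleft _ (gumbelCoord_nonpos hσ' hx (htail.trans hloc).le))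
  · refine mul_le_mul_rpow_neg_mul_add hP hq hκ.le hκ1 (by positivity) ?_
    rw [hdens]
    exact le_max_of_le_right (hall _)

lemma exists_eventually_norm_gevScore_le (hσ : 0 < θ₀.2.2) :
    ∃ A, 0 < A ∧ ∀ᶠ θ in 𝓝 θ₀, ∀ x, 0 < gevArg θ x →
      ‖gevScore θ x‖ ≤ A * scoreWeight θ.1 (gumbelCoord θ x) := by
  refine ⟨3 * (|θ₀.1| + 1 + 1) * (1 + (θ₀.2.2 / 2)⁻¹), by positivity, ?_⟩
  filter_upwards [eventually_abs_shape_lt θ₀, eventually_half_scale_lt hσ,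
    eventually_scale_pos hσ] with θ hγ hscale hσ' x hx
  refine (norm_gevScore_le hσ' hx).trans ?_
  have := one_add_sq_le_scoreWeight θ.1 (gumbelCoord θ x)
  gcongr
  nlinarith

lemma exists_eventually_hasFDerivAt_gevDensity (hγ : -(1 / 2) < θ₀.1) (hσ : 0 < θ₀.2.2)
    (hκ : 0 < κ) (hκ1 : κ ≤ 1) (hκγ : max (-θ₀.1) 0 < κ * (θ₀.1 + 1)) :
    ∃ C, 0 < C ∧ ∀ᶠ θ in 𝓝 θ₀, ∀ x, 0 < gevDensity θ₀ x →
      ∃ p' : ℝ × ℝ × ℝ →L[ℝ] ℝ, HasFDerivAt (gevDensity · x) p' θ ∧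
        ‖p'‖ ≤ C * gevEnvelope κ θ₀ x * (gevDensity θ x + gevDensity θ₀ x) := by
  obtain ⟨A, hA, hscore⟩ := exists_eventually_norm_gevScore_le hσ
  obtain ⟨C, hC, hweight⟩ := exists_eventually_scoreWeight_mul_gevDensity_le hσ hκ hκ1 hκγ
  refine ⟨A * C, by positivity, ?_⟩
  have hshape : ∀ᶠ θ : ℝ × ℝ × ℝ in 𝓝 θ₀, -(1 / 2) < θ.1 :=
    (isOpen_lt continuous_const continuous_fst).mem_nhds hγ
  filter_upwards [hscore, hweight, hshape, eventually_scale_pos hσ]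
    with θ hscore hweight hγ' hσ' x hq
  have hp := gevDensity_nonneg hσ' x
  rcases le_or_gt (gevArg θ x) 0 with hx | hx
  · refine ⟨0, hasFDerivAt_gevDensity_of_gevArg_nonpos hγ' hσ' hx, ?_⟩
    have henv := gevEnvelope_nonneg (κ := κ) hσ x
    rw [norm_zero]
    positivity
  · refine ⟨_, hasFDerivAt_gevDensity hσ' hx, ?_⟩
    calc ‖gevDensity θ x • gevScore θ x‖ = gevDensity θ x * ‖gevScore θ x‖ := by
          rw [norm_smul, Real.norm_of_nonneg hp]
      _ ≤ gevDensity θ x * (A * scoreWeight θ.1 (gumbelCoord θ x)) := by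
          gcongr
          exact hscore x hx
      _ = A * (scoreWeight θ.1 (gumbelCoord θ x) * gevDensity θ x) := by ring
      _ ≤ A * (C * gevEnvelope κ θ₀ x * (gevDensity θ x + gevDensity θ₀ x)) :=
          mul_le_mul_of_nonneg_left (hweight x hq hx) hA.le
      _ = A * C * gevEnvelope κ θ₀ x * (gevDensity θ x + gevDensity θ₀ x) := by ring

end Envelope

/-- The density of the standard Gumbel distribution. -/
noncomputable def gumbelDensity (l : ℝ) : ℝ := exp (-exp (-l) - l)

section Integrability

variable {θ : ℝ × ℝ × ℝ} {κ : ℝ}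

lemma gumbelDensity_nonneg (l : ℝ) : 0 ≤ gumbelDensity l := Real.exp_nonneg _

lemma lintegral_gevMeasure (hσ : 0 < θ.2.2) (f : ℝ → ENNReal) :
    ∫⁻ x, f x ∂gevMeasure θ =
      ∫⁻ l, ENNReal.ofReal (gumbelDensity l) * f (gumbelPoint θ l) := by
  have hsupp : Function.support ((fun x => ENNReal.ofReal (gevDensity θ x)) * f) ⊆
      gumbelPoint θ '' univ := by
    intro x hx
    have hpos : 0 < gevDensity θ x := ENNReal.ofReal_pos.1 (left_ne_zero_of_mul hx).bot_lt
    exact ⟨_, mem_univ _, gumbelPoint_gumbelCoord hσ.ne' ((gevDensity_pos_iff hσ).1 hpos)⟩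
  rw [gevMeasure, lintegral_withDensity_eq_lintegral_mul_non_measurable _
    (measurable_gevDensity θ).ennreal_ofReal (.of_forall fun _ => ENNReal.ofReal_lt_top),
    ← setLIntegral_eq_of_support_subset hsupp,
    lintegral_image_eq_lintegral_abs_deriv_mul .univ
      (fun l _ => (hasDerivAt_gumbelPoint θ l).hasDerivWithinAt)
      (strictMono_gumbelPoint hσ).injective.injOn, setLIntegral_univ]
  refine lintegral_congr fun l => ?_
  rw [Pi.mul_apply, gevDensity_gumbelPoint hσ, ← mul_assoc, ← ENNReal.ofReal_mul (abs_nonneg _),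
    abs_of_nonneg (by positivity), gevDensityOfGumbel, gumbelDensity]
  congr 2
  rw [mul_mul_mul_comm, mul_inv_cancel₀ hσ.ne', one_mul, ← Real.exp_add]
  ring_nf

lemma gumbelDensity_mul_rpow_neg_sq {σ : ℝ} (hσ : 0 < σ) (γ l κ : ℝ) :
    gumbelDensity l * (gevDensityOfGumbel γ σ l ^ (-κ)) ^ 2 =
      (σ⁻¹ ^ (-κ)) ^ 2 * exp ((2 * κ - 1) * exp (-l) + (2 * (κ * (γ + 1)) - 1) * l) := by
  rw [gumbelDensity, gevDensityOfGumbel_rpow hσ, mul_pow, ← Real.exp_nat_mul, mul_left_comm,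
    ← Real.exp_add]
  push_cast
  ring_nf

lemma exists_gumbelDensity_mul_rpow_quarter_sq_le (γ : ℝ) {σ : ℝ} (hσ : 0 < σ) :
    ∃ K, ∀ l ≤ 0, gumbelDensity l * (gevDensityOfGumbel γ σ l ^ (-(1 / 4 : ℝ))) ^ 2 ≤
      K * exp l := by
  set K := |γ| + 2
  have hK : 0 < K := by positivity
  refine ⟨(σ⁻¹ ^ (-(1 / 4 : ℝ))) ^ 2 * exp (K * log (K / (1 / 2)) - K), fun l hl => ?_⟩
  rw [gumbelDensity_mul_rpow_neg_sq hσ, mul_assoc, ← Real.exp_add]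
  refine mul_le_mul_of_nonneg_left (Real.exp_le_exp.2 ?_) (by positivity)
  have hmax := mul_sub_mul_exp_le hK one_half_pos (-l)
  nlinarith [neg_abs_le γ, abs_nonneg γ]

lemma exists_gumbelDensity_mul_rpow_sq_le (γ κ c : ℝ) {σ : ℝ} (hσ : 0 < σ) :
    ∃ K, ∀ l, c ≤ l → gumbelDensity l * (gevDensityOfGumbel γ σ l ^ (-κ)) ^ 2 ≤
      K * exp (-(1 - 2 * (κ * (γ + 1))) * l) := by
  refine ⟨(σ⁻¹ ^ (-κ)) ^ 2 * exp (|2 * κ - 1| * exp (-c)), fun l hl => ?_⟩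
  rw [gumbelDensity_mul_rpow_neg_sq hσ, mul_assoc, ← Real.exp_add, neg_sub]
  gcongr
  exact le_abs_self _

lemma memLp_gevEnvelope (hσ : 0 < θ.2.2) (hκ : 2 * (κ * (θ.1 + 1)) < 1) :
    MemLp (gevEnvelope κ θ) 2 (gevMeasure θ) := by
  have hmeas := measurable_gevEnvelope κ θ
  rw [memLp_two_iff_integrable_sq hmeas.aestronglyMeasurable]
  refine ⟨(hmeas.pow_const 2).aestronglyMeasurable, ?_⟩
  rw [hasFiniteIntegral_iff_ofReal (.of_forall fun x => sq_nonneg _), lintegral_gevMeasure hσ]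
  simp only [← ENNReal.ofReal_mul (gumbelDensity_nonneg _), gevEnvelope, gevDensity_gumbelPoint hσ]
  obtain ⟨K₁, hleft⟩ := exists_gumbelDensity_mul_rpow_quarter_sq_le θ.1 hσ
  obtain ⟨K₂, hright⟩ := exists_gumbelDensity_mul_rpow_sq_le θ.1 κ (-1) hσ
  refine lintegral_ofReal_lt_top_of_le_exp (K₁ := K₁) (K₂ := K₂) (c := -1) (sub_pos.2 hκ)
    (fun l hl => ?_) fun l hl => ?_
  · rw [envelopeExponent, if_pos (strictMono_gumbelPoint hσ hl)]
    exact hleft l (by linarith)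
  · rw [envelopeExponent, if_neg ((strictMono_gumbelPoint hσ).monotone hl).not_gt]
    exact hright l hl

end Integrability

/-- **Lipschitz property of `m_θ`** for the GEV family at `θ₀ = (γ₀, μ₀, σ₀)` with
`γ₀ > −1/2`, `σ₀ > 0`: there are a measurable `ṁ ≥ 0` with `∫ ṁ² dP_{θ₀} < ∞` and a
neighbourhood `V` of `θ₀` such that `|m_{θ₁}(x) − m_{θ₂}(x)| ≤ ṁ(x) ‖θ₁ − θ₂‖` for all
`θ₁, θ₂ ∈ V` and all `x` with `p_{θ₀}(x) > 0`. -/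
theorem gev_m_lipschitz (θ₀ : ℝ × ℝ × ℝ) (hγ : -(1/2) < θ₀.1) (hσ : 0 < θ₀.2.2) :
    ∃ (mdot : ℝ → ℝ) (ε : ℝ),
      Measurable mdot ∧ (∀ x, 0 ≤ mdot x) ∧
      (∫⁻ x, ENNReal.ofReal (mdot x ^ 2) ∂(gevMeasure θ₀)) < ⊤ ∧
      0 < ε ∧
      ∀ θ₁ ∈ Metric.ball θ₀ ε, ∀ θ₂ ∈ Metric.ball θ₀ ε, ∀ x : ℝ,
        0 < gevDensity θ₀ x →
          |gevM θ₀ θ₁ x - gevM θ₀ θ₂ x| ≤ mdot x * ‖θ₁ - θ₂‖ := by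
  obtain ⟨κ, hκ, hκ1, hκ_lower, hκ_upper⟩ := exists_tail_exponent hγ
  obtain ⟨C, hC, hderiv⟩ := exists_eventually_hasFDerivAt_gevDensity hγ hσ hκ hκ1.le hκ_lower
  obtain ⟨ε, hε, hball⟩ :=
    Metric.eventually_nhds_iff_ball.1 (hderiv.and (eventually_scale_pos hσ))
  refine ⟨fun x => 2 * C * gevEnvelope κ θ₀ x, ε, (measurable_gevEnvelope κ θ₀).const_mul _,
    fun x => mul_nonneg (by positivity) (gevEnvelope_nonneg hσ x),
    ((memLp_gevEnvelope hσ hκ_upper).const_mul _).integrable_sq.lintegral_lt_top, hε,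
    fun θ₁ hθ₁ θ₂ hθ₂ x hx => ?_⟩
  have hlog := abs_log_sub_log_le_of_norm_fderiv_le (convex_ball θ₀ ε) hx
    (fun θ hθ => gevDensity_nonneg (hball θ hθ).2 x) (fun θ hθ => (hball θ hθ).1 x hx) hθ₁ hθ₂
  rw [gevM, gevM, ← mul_sub, abs_mul, abs_two, mul_assoc, mul_assoc]
  gcongr
  linarith
end
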